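/- arXiv:math/9501221 — 2 statements merged into one kernel-verified Lean document; each statement's English description precedes it below -/
import Mathlib

section
/- For every infinite sequence ā = (a(1), a(2), …) with a(i) > 0 for all i (and a(i) ≤ 1), and every constant ε > 0, there exist a sequence p̄ obtained from ā by inserting some zero terms (i.e., p(j) = a(i) if j = f(i) for a strictly increasing f : ℕ → ℕ, and p(j) = 0 otherwise) and a first-order sentence ψ of the language L_≤ such that limsup_{n→∞} Prob(n,p̄;ψ) = 1 and liminf_{n→∞} Prob(n,p̄;ψ) ≤ ε. -/
open FirstOrder Filter

namespace RandomGraph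

/-- The set of potential edges of a graph on `Fin n` (pairs `(v,w)` with `v < w`).
Vertex `v : Fin n` represents the number `v + 1` of the interval `[n] = {1, …, n}`. -/
abbrev EdgeIdx (n : ℕ) := {e : Fin n × Fin n // e.1 < e.2}

/-- An outcome of the random graph on `[n]`: a choice of which potential edges are present. -/
abbrev Sample (n : ℕ) := EdgeIdx n → Bool

/-- Adjacency of two vertices (described by their values in `Fin n`) in the outcome `ω`. -/
def adjVal {n : ℕ} (ω : Sample n) (a b : ℕ) : Prop :=
  ∃ e : EdgeIdx n, ω e = true ∧
    ((e.1.1.val = a ∧ e.1.2.val = b) ∨ (e.1.1.val = b ∧ e.1.2.val = a))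

/-- Adjacency of two vertices in the outcome `ω`. -/
def sampleAdj {n : ℕ} (ω : Sample n) (v w : Fin n) : Prop := adjVal ω v.val w.val

/-- The probability of the outcome `ω` in the model `G(n, p̄)`: each pair of distinct
vertices at distance `d` is an edge with probability `p d`, independently.  (The value `p 0` is
never used, since distinct vertices are at distance at least 1.) -/
noncomputable def sampleWeight (p : ℕ → ℝ) {n : ℕ} (ω : Sample n) : ℝ :=
  ∏ e : EdgeIdx n,
    (if ω e then p (e.1.2.val - e.1.1.val) else 1 - p (e.1.2.val - e.1.1.val))

/-- The probability of the outcome `ω` in the circular model `C(n, p̄)`: vertices `v, w` are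
adjacent with probability `p (min |v-w| (n - |v-w|))`, independently. -/
noncomputable def cWeight (p : ℕ → ℝ) {n : ℕ} (ω : Sample n) : ℝ :=
  ∏ e : EdgeIdx n,
    (if ω e then p (min (e.1.2.val - e.1.1.val) (n - (e.1.2.val - e.1.1.val)))
      else 1 - p (min (e.1.2.val - e.1.1.val) (n - (e.1.2.val - e.1.1.val))))

open scoped Classical in
/-- The probability of the event `P` in the random graph `G(n, p̄)`. -/
noncomputable def Pr (p : ℕ → ℝ) (n : ℕ) (P : Sample n → Prop) : ℝ :=
  ∑ ω : Sample n, if P ω then sampleWeight p ω else 0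

open scoped Classical in
/-- The probability of the event `P` in the circular random graph `C(n, p̄)`. -/
noncomputable def cPr (p : ℕ → ℝ) (n : ℕ) (P : Sample n → Prop) : ℝ :=
  ∑ ω : Sample n, if P ω then cWeight p ω else 0

/-! ### The language `L` of graphs (also used as the language `L^c`) -/

/-- An outcome `ω` of the random graph, viewed as a structure of `FirstOrder.Language.graph`,
the language with a single binary adjacency predicate. -/
def graphStructure {n : ℕ} (ω : Sample n) : Language.graph.Structure (Fin n) where
  RelMap | .adj => fun x => sampleAdj ω (x 0) (x 1)

/-- Satisfaction of a sentence of the language `L` in the outcome `ω`. -/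
def SatL {n : ℕ} (ω : Sample n) (ψ : Language.graph.Sentence) : Prop :=
  @Language.Sentence.Realize _ _ (graphStructure ω) ψ

/-- `Prob(n, p̄; ψ)` for a sentence `ψ` of the language `L`. -/
noncomputable def ProbL (p : ℕ → ℝ) (n : ℕ) (ψ : Language.graph.Sentence) : ℝ :=
  Pr p n fun ω => SatL ω ψ

/-- The probability that `C(n, p̄)` satisfies a sentence `ψ` of the language `L^c = L`. -/
noncomputable def cProbL (p : ℕ → ℝ) (n : ℕ) (ψ : Language.graph.Sentence) : ℝ :=
  cPr p n fun ω => SatL ω ψ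

/-! ### The language `L₊` -/

/-- The constants of the language `L₊`: the first element `1` and the last element `n`. -/
inductive plusFunc : ℕ → Type
  | one : plusFunc 0
  | last : plusFunc 0

/-- The relations of `L₊`: adjacency and successor. -/
inductive plusRel : ℕ → Type
  | adj : plusRel 2
  | succ : plusRel 2

/-- The language `L₊` with adjacency, successor (`x = y + 1`), and constants `1` and `n`. -/
def Lplus : Language := ⟨plusFunc, plusRel⟩

/-- An outcome `ω` of the random graph on `[m+1]`, as an `L₊`-structure. -/
def plusStructure {m : ℕ} (ω : Sample (m + 1)) : Lplus.Structure (Fin (m + 1)) where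
  funMap | .one => fun _ => 0 | .last => fun _ => Fin.last m
  RelMap
    | .adj => fun x => sampleAdj ω (x 0) (x 1)
    | .succ => fun x => (x 0).val = (x 1).val + 1

/-- `Prob(n, p̄; ψ)` for a sentence `ψ` of `L₊` (set to `0` in the irrelevant case `n = 0`,
where the constants cannot be interpreted). -/
noncomputable def ProbPlus (p : ℕ → ℝ) : ℕ → Lplus.Sentence → ℝ
  | 0, _ => 0
  | (m + 1), ψ => Pr p (m + 1) fun ω => @Language.Sentence.Realize _ _ (plusStructure ω) ψ

/-! ### The language `L≤` -/

/-- The relations of `L≤`: adjacency and linear order. -/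
inductive leRel : ℕ → Type
  | adj : leRel 2
  | le : leRel 2

/-- The language `L≤` with adjacency and a linear order. -/
def Lle : Language := ⟨fun _ => Empty, leRel⟩

/-- An outcome `ω` of the random graph on `[n]`, as an `L≤`-structure. -/
def leStructure {n : ℕ} (ω : Sample n) : Lle.Structure (Fin n) where
  funMap := fun f _ => Empty.elim f
  RelMap
    | .adj => fun x => sampleAdj ω (x 0) (x 1)
    | .le => fun x => x 0 ≤ x 1

/-- Satisfaction of a sentence of `L≤` in the outcome `ω`. -/
def SatLe {n : ℕ} (ω : Sample n) (ψ : Lle.Sentence) : Prop :=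
  @Language.Sentence.Realize _ _ (leStructure ω) ψ

/-- `Prob(n, p̄; ψ)` for a sentence `ψ` of `L≤`. -/
noncomputable def ProbLe (p : ℕ → ℝ) (n : ℕ) (ψ : Lle.Sentence) : ℝ :=
  Pr p n fun ω => SatLe ω ψ

/-! ### The circular languages `L₊^c` and `L≤^c` -/

/-- The relations of `L₊^c`: adjacency and cyclic successor. -/
inductive plusCRel : ℕ → Type
  | adj : plusCRel 2
  | succ : plusCRel 2

/-- The language `L₊^c`, with adjacency and cyclic successor (`x = y + 1 (mod n)`). -/
def LplusC : Language := ⟨fun _ => Empty, plusCRel⟩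

/-- An outcome `ω` of the circular random graph on `[n]`, as an `L₊^c`-structure. -/
def plusCStructure {n : ℕ} (ω : Sample n) : LplusC.Structure (Fin n) where
  funMap := fun f _ => Empty.elim f
  RelMap
    | .adj => fun x => sampleAdj ω (x 0) (x 1)
    | .succ => fun x => (x 0).val = ((x 1).val + 1) % n

/-- The probability that `C(n, p̄)` satisfies a sentence `ψ` of the language `L₊^c`. -/
noncomputable def cProbPlus (p : ℕ → ℝ) (n : ℕ) (ψ : LplusC.Sentence) : ℝ :=
  cPr p n fun ω => @Language.Sentence.Realize _ _ (plusCStructure ω) ψ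

/-- The relations of `L≤^c`: adjacency and the ternary clockwise-order predicate. -/
inductive cycRel : ℕ → Type
  | adj : cycRel 2
  | btw : cycRel 3

/-- The language `L≤^c`, with adjacency and the ternary clockwise-order predicate `C`. -/
def Lcyc : Language := ⟨fun _ => Empty, cycRel⟩

/-- `C(a, b, c)`: `a ≤ b ≤ c` holds after some cyclic permutation of `(a, b, c)`. -/
def cyclicBtw {n : ℕ} (a b c : Fin n) : Prop :=
  (a ≤ b ∧ b ≤ c) ∨ (b ≤ c ∧ c ≤ a) ∨ (c ≤ a ∧ a ≤ b)

/-- An outcome `ω` of the circular random graph on `[n]`, as an `L≤^c`-structure. -/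
def cycStructure {n : ℕ} (ω : Sample n) : Lcyc.Structure (Fin n) where
  funMap := fun f _ => Empty.elim f
  RelMap
    | .adj => fun x => sampleAdj ω (x 0) (x 1)
    | .btw => fun x => cyclicBtw (x 0) (x 1) (x 2)

/-- Satisfaction of a sentence of `L≤^c` in the outcome `ω`. -/
def SatCyc {n : ℕ} (ω : Sample n) (ψ : Lcyc.Sentence) : Prop :=
  @Language.Sentence.Realize _ _ (cycStructure ω) ψ

/-- The probability that `C(n, p̄)` satisfies a sentence `ψ` of the language `L≤^c`. -/
noncomputable def cProbCyc (p : ℕ → ℝ) (n : ℕ) (ψ : Lcyc.Sentence) : ℝ :=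
  cPr p n fun ω => SatCyc ω ψ

/-!
If `a i = 1` for infinitely many `i`, put the terms of `ā` at even positions and say that the least
and the greatest vertex are not adjacent. This sentence has probability `1 - p (n - 1)`, which is
`1` for all even `n` and `0` for infinitely many odd `n`.

Otherwise put the terms at rapidly growing positions `f i`, and say that there is a *central cut*:
a vertex `x`, not too close to either end, such that no edge leads from `[1, x]` to `[x + k, n]`.
The constant `k` exceeds the lengths `f j` of the finitely many terms that may be equal to `1`.

* For `n = f (i + 1)` every edge has length at most `f i`. Vertices at distance at least `f i` have
  disjoint sets of crossing edges, so these `n` offer many independent candidates for a cut,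
  each successful with a probability that does not depend on `f (i + 1)`.
* For `n = f i + r i + 1`, where `r` grows slowly compared to `f`, an edge of length `f j` starting
  at one of the first `r j + 1` vertices, or ending at one of the last ones, rules out a whole
  interval of candidates. If such edges exist for all `j ≥ j₀`, the intervals overlap and leave no
  candidate; and `r j` was chosen so large that the failure probabilities add up to at most `ε`.
-/

open MeasureTheory ProbabilityTheory
open scoped unitInterval Finset

variable {n : ℕ}

/-- The distance `|v - w|` between the endpoints of the potential edge `e = {v, w}`; the
subtraction is not truncated since `e.1.1 < e.1.2`. -/
def edgeLength (e : EdgeIdx n) : ℕ := e.1.2.val - e.1.1.val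

/-- The law of `G(n, p̄)` as a product of Bernoulli measures, `true` meaning that the edge is
present. The terms of `p̄` are bundled with their bounds as elements of the unit interval. -/
noncomputable def graphMeasure (p : ℕ → I) (n : ℕ) : Measure (Sample n) :=
  Measure.pi fun e => bernoulliMeasure true false (p (edgeLength e))

instance (p : ℕ → I) (n : ℕ) : IsProbabilityMeasure (graphMeasure p n) :=
  inferInstanceAs (IsProbabilityMeasure (Measure.pi _))

lemma graphMeasure_real_singleton (p : ℕ → I) (ω : Sample n) :
    (graphMeasure p n).real {ω} = sampleWeight (fun j => p j) ω := by
  classical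
  rw [measureReal_def, graphMeasure, Measure.pi_singleton, ENNReal.toReal_prod]
  refine Finset.prod_congr rfl fun e _ => ?_
  rw [← measureReal_def, bernoulliMeasure_real_apply _ (measurableSet_singleton _)]
  cases ω e <;> simp [edgeLength]

lemma Pr_eq_graphMeasure_real (p : ℕ → I) (P : Sample n → Prop) :
    Pr (fun j => p j) n P = (graphMeasure p n).real {ω | P ω} := by
  classical
  rw [Pr, ← Finset.sum_filter, ← Finset.coe_filter_univ, ← sum_measureReal_singleton]
  simp_rw [graphMeasure_real_singleton]

section Independence

variable (p : ℕ → I)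

/-- The event that no edge of `D` is present. -/
def absent (D : Finset (EdgeIdx n)) : Set (Sample n) := {ω | ∀ e ∈ D, ω e = false}

lemma graphMeasure_absent (D : Finset (EdgeIdx n)) :
    graphMeasure p n (absent D) =
      ∏ e ∈ D, bernoulliMeasure true false (p (edgeLength e)) {false} :=
  Measure.pi_pi_finset (μ := fun e => bernoulliMeasure true false (p (edgeLength e)))
    (fun _ => {false}) D

lemma graphMeasure_real_absent (D : Finset (EdgeIdx n)) :
    (graphMeasure p n).real (absent D) = ∏ e ∈ D, (1 - p (edgeLength e) : ℝ) := by
  rw [measureReal_def, graphMeasure_absent, ENNReal.toReal_prod]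
  simp

lemma iIndepSet_absent {ι : Type*} {B : ι → Finset (EdgeIdx n)}
    (hB : Pairwise (Function.onFun Disjoint B)) :
    iIndepSet (fun t => absent (B t)) (graphMeasure p n) := by
  classical
  refine (iIndepSet_iff_meas_biInter fun t => .of_discrete).2 fun T => ?_
  have absent_biUnion : ⋂ t ∈ T, absent (B t) = absent (T.biUnion B) := by
    ext ω
    simp only [absent, Set.mem_iInter, Set.mem_ofPred_eq, Finset.mem_biUnion]
    exact ⟨fun h e ⟨t, ht, he⟩ => h t ht e he, fun h t ht e he => h e ⟨t, ht, he⟩⟩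
  rw [absent_biUnion, graphMeasure_absent, Finset.prod_biUnion fun s _ t _ hst => hB hst]
  simp_rw [graphMeasure_absent]

lemma graphMeasure_real_biInter_compl_absent {ι : Type*} {B : ι → Finset (EdgeIdx n)}
    (hB : Pairwise (Function.onFun Disjoint B)) (T : Finset ι) :
    (graphMeasure p n).real (⋂ t ∈ T, (absent (B t))ᶜ) =
      ∏ t ∈ T, (1 - ∏ e ∈ B t, (1 - p (edgeLength e) : ℝ)) := by
  have indep : iIndep (fun t => MeasurableSpace.generateFrom {absent (B t)}) (graphMeasure p n) :=
    iIndepSet_absent p hB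
  rw [measureReal_def, indep.meas_biInter fun t _ =>
    (MeasurableSpace.measurableSet_generateFrom (Set.mem_singleton _)).compl, ENNReal.toReal_prod]
  refine Finset.prod_congr rfl fun t _ => ?_
  rw [← measureReal_def, probReal_compl_eq_one_sub .of_discrete, graphMeasure_real_absent]

lemma ae_forall_eq_false_of_eq_zero :
    ∀ᵐ ω ∂graphMeasure p n, ∀ e : EdgeIdx n, p (edgeLength e) = 0 → ω e = false := by
  refine ae_all_iff.2 fun e => Filter.eventually_imp_distrib_left.2 fun he => ?_
  have absent_singleton : {ω : Sample n | ω e = false} = absent {e} := by simp [absent]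
  refine (mem_ae_iff_prob_eq_one .of_discrete).2 ?_
  rw [absent_singleton, graphMeasure_absent]
  simp [he]

end Independence
section Sentences

variable {α : Type*}

/-- The atomic formula `s ≤ t` of `L≤`. -/
def leFormula (s t : α) : Lle.Formula α :=
  Language.Relations.formula₂ (L := Lle) (leRel.le : Lle.Relations 2) (.var s) (.var t)

/-- The atomic formula of `L≤` saying that `s` and `t` are adjacent. -/
def adjFormula (s t : α) : Lle.Formula α :=
  Language.Relations.formula₂ (L := Lle) (leRel.adj : Lle.Relations 2) (.var s) (.var t)

/-- The formula `t 0 < t 1 < ⋯ < t m`, with `s < t` written as `¬ t ≤ s`. Prefixed by existential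
quantifiers it expresses inequalities such as `x + m ≤ y`, for which `L≤` has no terms. -/
noncomputable def chainFormula {m : ℕ} (t : Fin (m + 1) → α) : Lle.Formula α :=
  Language.Formula.iInf fun i : Fin m => ∼(leFormula (t i.succ) (t i.castSucc))

/-- The sentence saying that the least and the greatest vertex are not adjacent. -/
noncomputable def endpointsNonadjacent : Lle.Sentence :=
  Language.Formula.iExs (Fin 2)
    (Language.Formula.iAlls (Fin 1)
        (leFormula (.inl (.inr 0)) (.inr 0) ⊓ leFormula (.inr 0) (.inl (.inr 1))) ⊓
      ∼(adjFormula (.inr 0) (.inr 1)))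

/-- The sentence expressing `HasCentralCut k`: in some chain of `3 * k + 1` vertices, the one with
index `k` plays the role of `x`, and `u ≤ x` is never adjacent to the top of a chain of `k + 1`
vertices starting at or above `x`. The innermost block of variables lists `u` before that chain. -/
noncomputable def centralCutSentence (k : ℕ) : Lle.Sentence :=
  Language.Formula.iExs (Fin (3 * k + 1))
    (chainFormula .inr ⊓
      Language.Formula.iAlls (Fin (k + 2))
        ((leFormula (.inr 0) (.inl (.inr ⟨k, by omega⟩)) ⊓
            leFormula (.inl (.inr ⟨k, by omega⟩)) (.inr 1) ⊓
            chainFormula (fun i : Fin (k + 1) => .inr i.succ)).imp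
          ∼(adjFormula (.inr 0) (.inr (Fin.last (k + 1))))))

variable (ω : Sample n)

lemma realize_leFormula (s t : α) (v : α → Fin n) :
    @Language.Formula.Realize _ _ (leStructure ω) _ (leFormula s t) v ↔ v s ≤ v t :=
  letI := leStructure ω
  Language.Formula.realize_rel₂ (L := Lle)

lemma realize_adjFormula (s t : α) (v : α → Fin n) :
    @Language.Formula.Realize _ _ (leStructure ω) _ (adjFormula s t) v ↔
      sampleAdj ω (v s) (v t) :=
  letI := leStructure ω
  Language.Formula.realize_rel₂ (L := Lle)

lemma realize_chainFormula {m : ℕ} (t : Fin (m + 1) → α) (v : α → Fin n) :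
    @Language.Formula.Realize _ _ (leStructure ω) _ (chainFormula t) v ↔ StrictMono (v ∘ t) := by
  let _ := leStructure ω
  simp only [chainFormula, Language.Formula.realize_iInf, Language.Formula.realize_not,
    realize_leFormula, not_le, Fin.strictMono_iff_lt_succ, Function.comp_apply]

lemma sampleAdj_iff_of_lt {u v : Fin n} (huv : u < v) :
    sampleAdj ω u v ↔ ω ⟨(u, v), huv⟩ = true := by
  refine ⟨?_, fun h => ⟨_, h, .inl ⟨rfl, rfl⟩⟩⟩
  rintro ⟨⟨⟨u', v'⟩, hlt⟩, h, ⟨hu, hv⟩ | ⟨hu, hv⟩⟩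
  · obtain rfl := Fin.ext hu
    obtain rfl := Fin.ext hv
    exact h
  · simp only [Fin.lt_def] at hlt huv hu hv
    omega

lemma satLe_endpointsNonadjacent (ω : Sample (n + 1)) :
    SatLe ω endpointsNonadjacent ↔ ¬ sampleAdj ω 0 (Fin.last n) := by
  let _ := leStructure ω
  simp only [SatLe, endpointsNonadjacent, Language.Sentence.Realize,
    Language.Formula.realize_iExs, Language.Formula.realize_iAlls, Language.Formula.realize_inf,
    Language.Formula.realize_not, realize_leFormula, realize_adjFormula,
    Sum.elim_inl, Sum.elim_inr]
  constructor
  · rintro ⟨t, hbounds, hadj⟩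
    have h0 : t 0 = 0 := Fin.le_zero_iff.1 (hbounds fun _ => 0).1
    have h1 : t 1 = Fin.last n := Fin.last_le_iff.1 (hbounds fun _ => Fin.last n).2
    rwa [h0, h1] at hadj
  · exact fun h => ⟨![0, Fin.last n], fun z => ⟨Fin.zero_le _, Fin.le_last _⟩, h⟩

lemma add_sub_le_of_strictMono {m : ℕ} {t : Fin (m + 1) → Fin n} (ht : StrictMono t)
    {i j : Fin (m + 1)} (hij : i ≤ j) : (t i : ℕ) + (j - i : ℕ) ≤ t j := by
  have mono : Monotone fun i => (t i : ℤ) - (i : ℕ) := Fin.monotone_iff_le_succ.2 fun i => by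
    have := Fin.lt_def.1 (ht i.castSucc_lt_succ)
    simp only [Fin.val_castSucc, Fin.val_succ]
    omega
  have := mono hij
  simp only [Fin.le_def] at hij this
  omega

/-- The event that, for some `x` at distance about `k` or more from both ends, no edge joins a
vertex `u ≤ x` to a vertex `v ≥ x + k`. The gap `k` makes all edges shorter than `k` irrelevant. -/
def HasCentralCut (k : ℕ) (ω : Sample n) : Prop :=
  ∃ x, k ≤ x ∧ x + 2 * k < n ∧
    ∀ e : EdgeIdx n, e.1.1.val ≤ x → x + k ≤ e.1.2.val → ω e = false

lemma satLe_centralCutSentence {k : ℕ} (hk : 0 < k) :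
    SatLe ω (centralCutSentence k) ↔ HasCentralCut k ω := by
  let _ := leStructure ω
  simp only [SatLe, centralCutSentence, Language.Sentence.Realize,
    Language.Formula.realize_iExs, Language.Formula.realize_iAlls, Language.Formula.realize_inf,
    Language.Formula.realize_not, Language.Formula.realize_imp, realize_leFormula,
    realize_adjFormula, realize_chainFormula, Sum.elim_inl, Sum.elim_inr]
  constructor
  · rintro ⟨t, ht, hcut⟩
    have before : (t 0 : ℕ) + k ≤ t ⟨k, by omega⟩ :=
      add_sub_le_of_strictMono ht (Fin.zero_le ⟨k, by omega⟩)
    have after : (t ⟨k, by omega⟩ : ℕ) + (3 * k - k) ≤ t (Fin.last _) :=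
      add_sub_le_of_strictMono ht (Fin.le_last ⟨k, by omega⟩)
    refine ⟨t ⟨k, by omega⟩, by omega, by omega, fun e hu hv => ?_⟩
    let s : Fin (k + 2) → Fin n := Fin.cons e.1.1 fun i => ⟨e.1.2 - k + i, by omega⟩
    have s_last : s (Fin.last (k + 1)) = e.1.2 := Fin.ext (Nat.sub_add_cancel (by omega))
    have x_le : t ⟨k, by omega⟩ ≤ s 1 := Fin.le_def.2 (Nat.le_sub_of_add_le hv)
    have s_chain : StrictMono fun i : Fin (k + 1) => s i.succ := fun i j hij =>
      Fin.lt_def.2 (Nat.add_lt_add_left hij _)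
    have nonadj : ¬ sampleAdj ω e.1.1 (s (Fin.last (k + 1))) := hcut s ⟨⟨hu, x_le⟩, s_chain⟩
    rwa [s_last, sampleAdj_iff_of_lt ω e.2, Bool.not_eq_true] at nonadj
  · rintro ⟨x, hkx, hxn, hcut⟩
    refine ⟨fun i => ⟨x - k + i, by omega⟩, ?_, ?_⟩
    · intro i j hij
      simp only [Fin.lt_def, Function.comp_apply, Sum.elim_inr] at hij ⊢
      omega
    · rintro s ⟨⟨hu, hx⟩, hs⟩
      have gap : (s 1 : ℕ) + k ≤ s (Fin.last (k + 1)) :=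
        add_sub_le_of_strictMono hs (Fin.zero_le (Fin.last k))
      simp only [Fin.le_def] at hu hx
      have hlt : s 0 < s (Fin.last (k + 1)) := by simp only [Fin.lt_def]; omega
      rw [sampleAdj_iff_of_lt ω hlt, Bool.not_eq_true]
      exact hcut _ (by dsimp only; omega) (by dsimp only; omega)

end Sentences

section EndpointPair

variable (p : ℕ → I)

lemma probLe_endpointsNonadjacent {d : ℕ} (hd : 0 < d) :
    ProbLe (fun j => p j) (d + 1) endpointsNonadjacent = 1 - p d := by
  let e : EdgeIdx (d + 1) := ⟨(0, Fin.last d), Fin.lt_def.2 hd⟩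
  have sat_iff : {ω | SatLe ω endpointsNonadjacent} = absent {e} := by
    ext ω
    simp [satLe_endpointsNonadjacent, absent, sampleAdj_iff_of_lt ω e.2, e]
  rw [ProbLe, Pr_eq_graphMeasure_real, sat_iff, graphMeasure_real_absent, Finset.prod_singleton]
  simp [edgeLength, e]

end EndpointPair

section CentralCut

variable (p : ℕ → I)

lemma probLe_centralCutSentence {k : ℕ} (hk : 0 < k) (n : ℕ) :
    ProbLe (fun j => p j) n (centralCutSentence k) =
      (graphMeasure p n).real {ω | HasCentralCut k ω} := by
  simp_rw [ProbLe, Pr_eq_graphMeasure_real, satLe_centralCutSentence _ hk]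

/-- The potential edges of length at most `L` that prevent a cut at `x` with gap `k`. -/
def crossingEdges (n k L x : ℕ) : Finset (EdgeIdx n) :=
  {e | e.1.1.val ≤ x ∧ x + k ≤ e.1.2.val ∧ e.1.2.val ≤ e.1.1.val + L}

lemma mem_crossingEdges {k L x : ℕ} {e : EdgeIdx n} : e ∈ crossingEdges n k L x ↔
    e.1.1.val ≤ x ∧ x + k ≤ e.1.2.val ∧ e.1.2.val ≤ e.1.1.val + L := by
  simp [crossingEdges]

lemma card_crossingEdges_le (n k L x : ℕ) : #(crossingEdges n k L x) ≤ (L + 1) ^ 2 := by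
  have le_rectangle : #(crossingEdges n k L x) ≤ #(.Icc (x - L) x ×ˢ .Icc x (x + L)) := by
    refine Finset.card_le_card_of_injOn (fun e => (e.1.1.val, e.1.2.val)) (fun e he => ?_) ?_
    · have := mem_crossingEdges.1 he
      simp only [Finset.coe_product, Finset.coe_Icc, Set.mem_prod, Set.mem_Icc]
      omega
    · intro e _ e' _ h
      rw [Prod.mk.injEq, Fin.val_inj, Fin.val_inj] at h
      exact Subtype.ext (Prod.ext h.1 h.2)
  calc #(crossingEdges n k L x)
      ≤ (x + 1 - (x - L)) * (x + L + 1 - x) := by simpa using le_rectangle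
    _ ≤ (L + 1) * (L + 1) := Nat.mul_le_mul (by omega) (by omega)
    _ = (L + 1) ^ 2 := (sq _).symm

lemma pairwise_disjoint_crossingEdges (n L : ℕ) {k : ℕ} (hk : 0 < k) (x₀ : ℕ) :
    Pairwise (Function.onFun Disjoint fun t => crossingEdges n k L (x₀ + t * L)) := by
  refine (pairwise_disjoint_on _).2 fun s t hst => Finset.disjoint_left.2 fun e hs ht => ?_
  have := Nat.mul_le_mul_right L hst
  rw [mem_crossingEdges] at hs ht
  rw [Nat.succ_mul] at this
  omega

lemma pow_le_prod_crossingEdges {k L : ℕ} (x : ℕ) {c : ℝ} (hc : 0 ≤ c) (hc1 : c ≤ 1)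
    (hpc : ∀ d, k ≤ d → d ≤ L → c ≤ 1 - p d) :
    c ^ (L + 1) ^ 2 ≤ ∏ e ∈ crossingEdges n k L x, (1 - p (edgeLength e) : ℝ) :=
  calc c ^ (L + 1) ^ 2 ≤ c ^ #(crossingEdges n k L x) :=
        pow_le_pow_of_le_one hc hc1 (card_crossingEdges_le n k L x)
    _ = ∏ _e ∈ crossingEdges n k L x, c := (Finset.prod_const c).symm
    _ ≤ _ := Finset.prod_le_prod (fun _ _ => hc) fun e he => by
      rw [mem_crossingEdges] at he
      exact hpc _ (by unfold edgeLength; omega) (by unfold edgeLength; omega)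

lemma hasCentralCut_of_mem_absent {k L T t : ℕ} {ω : Sample n} (hn : 3 * k + T * L < n)
    (hlong : ∀ e : EdgeIdx n, L < edgeLength e → ω e = false) (ht : t < T)
    (habsent : ω ∈ absent (crossingEdges n k L (k + t * L))) : HasCentralCut k ω := by
  have := Nat.mul_le_mul_right L ht.le
  refine ⟨k + t * L, by omega, by omega, fun e hu hv => ?_⟩
  by_cases hlen : e.1.2.val ≤ e.1.1.val + L
  · exact habsent e (mem_crossingEdges.2 ⟨hu, hv, hlen⟩)
  · exact hlong e (by unfold edgeLength; omega)

lemma one_sub_le_graphMeasure_real_hasCentralCut {k L T : ℕ} (hk : 0 < k)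
    (hn : 3 * k + T * L < n) {c : ℝ} (hc : 0 ≤ c) (hc1 : c ≤ 1)
    (hpc : ∀ d, k ≤ d → d ≤ L → c ≤ 1 - p d) (hp0 : ∀ d, L < d → d < n → p d = 0) :
    1 - (1 - c ^ (L + 1) ^ 2) ^ T ≤ (graphMeasure p n).real {ω | HasCentralCut k ω} := by
  let B : ℕ → Finset (EdgeIdx n) := fun t => crossingEdges n k L (k + t * L)
  have noCut_le : ({ω | HasCentralCut k ω}ᶜ : Set (Sample n)) ≤ᵐ[graphMeasure p n]
      ⋂ t ∈ Finset.range T, (absent (B t))ᶜ := by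
    filter_upwards [ae_forall_eq_false_of_eq_zero p] with ω hzero hω
    refine Set.mem_iInter₂.2 fun t ht habsent => hω ?_
    have hlong (e : EdgeIdx n) (he : L < edgeLength e) : ω e = false :=
      hzero e (hp0 _ he (by unfold edgeLength; omega))
    exact hasCentralCut_of_mem_absent hn hlong (Finset.mem_range.1 ht) habsent
  have noCut_real_le : 1 - (graphMeasure p n).real {ω | HasCentralCut k ω} ≤
      (1 - c ^ (L + 1) ^ 2) ^ T :=
    calc 1 - (graphMeasure p n).real {ω | HasCentralCut k ω}
        = (graphMeasure p n).real {ω | HasCentralCut k ω}ᶜ :=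
          (probReal_compl_eq_one_sub .of_discrete).symm
      _ ≤ (graphMeasure p n).real (⋂ t ∈ Finset.range T, (absent (B t))ᶜ) :=
          ENNReal.toReal_mono (measure_ne_top _ _) (measure_mono_ae noCut_le)
      _ = ∏ t ∈ Finset.range T, (1 - ∏ e ∈ B t, (1 - p (edgeLength e) : ℝ)) :=
          graphMeasure_real_biInter_compl_absent p
            (pairwise_disjoint_crossingEdges n L hk k) _
      _ ≤ ∏ _t ∈ Finset.range T, (1 - c ^ (L + 1) ^ 2) := by
          refine Finset.prod_le_prod (fun t _ => ?_) fun t _ => ?_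
          · rw [← graphMeasure_real_absent]
            exact sub_nonneg.2 measureReal_le_one
          · exact sub_le_sub_left (pow_le_prod_crossingEdges p _ hc hc1 hpc) 1
      _ = (1 - c ^ (L + 1) ^ 2) ^ T := by simp
  linarith

/-- The potential edges of length `d` whose smaller endpoint lies in `S`. -/
def edgesFrom (n d : ℕ) (S : Finset ℕ) : Finset (EdgeIdx n) :=
  {e | e.1.1.val ∈ S ∧ e.1.2.val = e.1.1.val + d}

lemma mem_edgesFrom {d : ℕ} {S : Finset ℕ} {e : EdgeIdx n} :
    e ∈ edgesFrom n d S ↔ e.1.1.val ∈ S ∧ e.1.2.val = e.1.1.val + d := by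
  simp [edgesFrom]

lemma card_edgesFrom {d : ℕ} (hd : 0 < d) {S : Finset ℕ} (hS : ∀ u ∈ S, u + d < n) :
    #(edgesFrom n d S) = #S := by
  refine Finset.card_bij (fun e _ => e.1.1.val) (fun e he => (mem_edgesFrom.1 he).1) ?_ ?_
  · intro e he e' he' h
    rw [mem_edgesFrom] at he he'
    exact Subtype.ext (Prod.ext (Fin.ext h) (Fin.ext (by omega)))
  · intro u hu
    have := hS u hu
    exact ⟨⟨(⟨u, by omega⟩, ⟨u + d, this⟩), Fin.lt_def.2 (by dsimp only; omega)⟩,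
      mem_edgesFrom.2 ⟨hu, rfl⟩, rfl⟩

lemma graphMeasure_real_absent_edgesFrom {d : ℕ} (hd : 0 < d) {S : Finset ℕ}
    (hS : ∀ u ∈ S, u + d < n) :
    (graphMeasure p n).real (absent (edgesFrom n d S)) = (1 - p d : ℝ) ^ #S := by
  rw [graphMeasure_real_absent, ← card_edgesFrom hd hS]
  refine Finset.prod_eq_pow_card fun e he => ?_
  rw [edgeLength, (mem_edgesFrom.1 he).2, Nat.add_sub_cancel_left]

lemma exists_le_and_le_of_overlap {β : Type*} [LinearOrder β] {lo hi : ℕ → β} {j₀ i : ℕ} {y : β}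
    (hij : j₀ ≤ i) (hoverlap : ∀ j, j₀ ≤ j → lo (j + 1) ≤ hi j) (hlo : lo j₀ ≤ y) (hhi : y ≤ hi i) :
    ∃ j ∈ Finset.Icc j₀ i, lo j ≤ y ∧ y ≤ hi j := by
  induction i, hij using Nat.le_induction with
  | base => exact ⟨j₀, by simp, hlo, hhi⟩
  | succ i hij ih =>
    rcases le_or_gt y (hi i) with hy | hy
    · obtain ⟨j, hj, hjy⟩ := ih hy
      exact ⟨j, Finset.Icc_subset_Icc_right i.le_succ hj, hjy⟩
    · exact ⟨i + 1, Finset.mem_Icc.2 ⟨by omega, le_rfl⟩, (hoverlap i hij).trans hy.le, hhi⟩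

/-- The first `r + 1` potential edges of length `d`, counted from the left end. -/
def initialEdges (n d r : ℕ) : Finset (EdgeIdx n) := edgesFrom n d (.range (r + 1))

/-- The last `r + 1` potential edges of length `d`, whose larger endpoints are the last `r + 1`
vertices. The truncated subtractions are genuine ones when `d + r < n`. -/
def finalEdges (n d r : ℕ) : Finset (EdgeIdx n) := edgesFrom n d (.Ico (n - (d + r + 1)) (n - d))

lemma graphMeasure_real_absent_initialEdges {d r : ℕ} (hd : 0 < d) (hn : d + r < n) :
    (graphMeasure p n).real (absent (initialEdges n d r)) = (1 - p d : ℝ) ^ (r + 1) := by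
  rw [initialEdges, graphMeasure_real_absent_edgesFrom p hd, Finset.card_range]
  intro u hu
  rw [Finset.mem_range] at hu
  omega

lemma graphMeasure_real_absent_finalEdges {d r : ℕ} (hd : 0 < d) (hn : d + r < n) :
    (graphMeasure p n).real (absent (finalEdges n d r)) = (1 - p d : ℝ) ^ (r + 1) := by
  rw [finalEdges, graphMeasure_real_absent_edgesFrom p hd, Nat.card_Ico]
  · congr 1
    omega
  · intro u hu
    rw [Finset.mem_Ico] at hu
    omega

lemma not_hasCentralCut {f r : ℕ → ℕ} {k j₀ i : ℕ} {ω : Sample n} (hij : j₀ ≤ i)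
    (hk : r j₀ ≤ k) (hoverlap : ∀ j, j₀ ≤ j → r (j + 1) + k ≤ f j) (hn : n + k ≤ 2 * f i + 2)
    (hfit : ∀ j ∈ Finset.Icc j₀ i, f j + r j < n)
    (hinitial : ∀ j ∈ Finset.Icc j₀ i, ω ∉ absent (initialEdges n (f j) (r j)))
    (hfinal : ∀ j ∈ Finset.Icc j₀ i, ω ∉ absent (finalEdges n (f j) (r j))) :
    ¬ HasCentralCut k ω := by
  rintro ⟨x, hkx, hxn, hcut⟩
  have cover {y : ℕ} (hky : k ≤ y) (hy : y + k ≤ f i) :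
      ∃ j ∈ Finset.Icc j₀ i, r j + k ≤ y + k ∧ y + k ≤ f j :=
    exists_le_and_le_of_overlap (lo := fun j => r j + k) hij hoverlap (by omega) hy
  rcases le_or_gt (x + k) (f i) with hx | hx
  · obtain ⟨j, hj, hrx, hxf⟩ := cover hkx hx
    refine hinitial j hj fun e he => hcut e ?_ ?_ <;>
    · simp only [initialEdges, mem_edgesFrom, Finset.mem_range] at he
      omega
  · obtain ⟨j, hj, hrx, hxf⟩ := cover (y := n - 1 - (x + k)) (by omega) (by omega)
    have := hfit j hj
    refine hfinal j hj fun e he => hcut e ?_ ?_ <;>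
    · simp only [finalEdges, mem_edgesFrom, Finset.mem_Ico] at he
      omega

lemma graphMeasure_real_hasCentralCut_le {f r : ℕ → ℕ} {k j₀ i : ℕ} (hij : j₀ ≤ i)
    (hk : r j₀ ≤ k) (hoverlap : ∀ j, j₀ ≤ j → r (j + 1) + k ≤ f j) (hn : n + k ≤ 2 * f i + 2)
    (hf : ∀ j, 0 < f j) (hfit : ∀ j ∈ Finset.Icc j₀ i, f j + r j < n) :
    (graphMeasure p n).real {ω | HasCentralCut k ω} ≤
      2 * ∑ j ∈ Finset.Icc j₀ i, (1 - p (f j) : ℝ) ^ (r j + 1) := by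
  let A : ℕ → Set (Sample n) := fun j =>
    absent (initialEdges n (f j) (r j)) ∪ absent (finalEdges n (f j) (r j))
  have cut_subset : {ω : Sample n | HasCentralCut k ω} ⊆ ⋃ j ∈ Finset.Icc j₀ i, A j := by
    intro ω hω
    by_contra hA
    simp only [A, Set.mem_iUnion, Set.mem_union, not_exists, not_or] at hA
    exact not_hasCentralCut hij hk hoverlap hn hfit (fun j hj => (hA j hj).1)
      (fun j hj => (hA j hj).2) hω
  have real_A_le : ∀ j ∈ Finset.Icc j₀ i,
      (graphMeasure p n).real (A j) ≤ 2 * (1 - p (f j) : ℝ) ^ (r j + 1) := by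
    intro j hj
    refine (measureReal_union_le _ _).trans_eq ?_
    rw [graphMeasure_real_absent_initialEdges p (hf j) (hfit j hj),
      graphMeasure_real_absent_finalEdges p (hf j) (hfit j hj), two_mul]
  calc (graphMeasure p n).real {ω | HasCentralCut k ω}
      ≤ (graphMeasure p n).real (⋃ j ∈ Finset.Icc j₀ i, A j) :=
          measureReal_mono cut_subset (measure_ne_top _ _)
    _ ≤ ∑ j ∈ Finset.Icc j₀ i, (graphMeasure p n).real (A j) := measureReal_biUnion_finset_le _ _
    _ ≤ ∑ j ∈ Finset.Icc j₀ i, 2 * (1 - p (f j) : ℝ) ^ (r j + 1) := Finset.sum_le_sum real_A_le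
    _ = _ := (Finset.mul_sum ..).symm

end CentralCut

section SequenceLimits

variable {u : ℕ → ℝ} {m : ℕ → ℕ}

lemma limsup_eq_one_of_tendsto_comp (hu : ∀ n, u n ∈ I) (hm : Tendsto m atTop atTop)
    (hum : Tendsto (u ∘ m) atTop (nhds 1)) : limsup u atTop = 1 := by
  have hbdd : IsBoundedUnder (· ≤ ·) atTop u := isBoundedUnder_of ⟨1, fun n => (hu n).2⟩
  have hbdd' (l : Filter ℕ) : IsBoundedUnder (· ≥ ·) l u := isBoundedUnder_of ⟨0, fun n => (hu n).1⟩
  refine le_antisymm ?_ ?_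
  · exact limsup_le_of_le (hbdd' _).isCoboundedUnder_le (.of_forall fun n => (hu n).2)
  · calc 1 = limsup u (map m atTop) := hum.limsup_eq.symm
      _ ≤ limsup u atTop := limsup_le_limsup_of_le hm (hbdd' _).isCoboundedUnder_le hbdd

lemma liminf_le_of_frequently_comp_le (hu : ∀ n, 0 ≤ u n) (hm : Tendsto m atTop atTop)
    {ε : ℝ}
    (hum : ∃ᶠ i in atTop, u (m i) ≤ ε) : liminf u atTop ≤ ε :=
  liminf_le_of_frequently_le (hm.frequently hum) (isBoundedUnder_of ⟨0, hu⟩)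

lemma exists_strictMono_forall_le_succ (F : ℕ → ℕ → ℕ) :
    ∃ f : ℕ → ℕ, StrictMono f ∧ 0 < f 0 ∧ ∀ i, F i (f i) ≤ f (i + 1) := by
  let f : ℕ → ℕ := fun i => Nat.rec 1 (fun i L => max (L + 1) (F i L)) i
  have lt_succ (i : ℕ) : f i < f (i + 1) := le_max_left (f i + 1) (F i (f i))
  exact ⟨f, strictMono_nat_of_lt_succ lt_succ, one_pos, fun i => le_max_right _ _⟩

end SequenceLimits

lemma probLe_mem_unitInterval (p : ℕ → I) (n : ℕ) (ψ : Lle.Sentence) :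
    ProbLe (fun j => p j) n ψ ∈ I := by
  rw [ProbLe, Pr_eq_graphMeasure_real]
  exact ⟨measureReal_nonneg, measureReal_le_one⟩

section Spread

variable {f : ℕ → ℕ} {a : ℕ → I}

/-- The sequence obtained from `a` by inserting zeros so that `a i` lands at position `f i`. -/
noncomputable def spread (f : ℕ → ℕ) (a : ℕ → I) : ℕ → I := Function.extend f a 0

lemma spread_apply (hf : StrictMono f) (i : ℕ) : spread f a (f i) = a i :=
  hf.injective.extend_apply a 0 i

lemma spread_eq_zero {j : ℕ} (hj : ∀ i, f i ≠ j) : spread f a j = 0 :=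
  Function.extend_apply' a _ j fun ⟨i, hi⟩ => hj i hi

lemma spread_eq_zero_of_lt_of_lt (hf : StrictMono f) {i d : ℕ} (hlt : f i < d)
    (hlt' : d < f (i + 1)) : spread f a d = 0 := by
  refine spread_eq_zero ?_
  rintro l rfl
  have := hf.lt_iff_lt.1 hlt
  have := hf.lt_iff_lt.1 hlt'
  omega

lemma exists_spread_of_frequently_eq_one (ha : ∃ᶠ i in atTop, a i = 1) :
    ∃ (f : ℕ → ℕ) (ψ : Lle.Sentence), StrictMono f ∧ 1 ≤ f 0 ∧
      limsup (fun n => ProbLe (fun j => spread f a j) n ψ) atTop = 1 ∧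
      liminf (fun n => ProbLe (fun j => spread f a j) n ψ) atTop ≤ 0 := by
  let f : ℕ → ℕ := fun i => 2 * i + 2
  have hf : StrictMono f := fun i j hij => by dsimp only [f]; omega
  have hbounds := fun n => probLe_mem_unitInterval (spread f a) n endpointsNonadjacent
  refine ⟨f, endpointsNonadjacent, hf, Nat.le_add_left 1 _,
    limsup_eq_one_of_tendsto_comp hbounds (m := fun i => 2 * i + 1 + 1) ?_ ?_,
    liminf_le_of_frequently_comp_le (fun n => (hbounds n).1) (m := fun i => f i + 1) ?_ ?_⟩
  · exact tendsto_atTop_mono (fun i => by dsimp only [id]; omega) tendsto_id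
  · refine tendsto_const_nhds.congr fun i => ?_
    have hodd : spread f a (2 * i + 1) = 0 := spread_eq_zero fun l => by dsimp only [f]; omega
    simp [probLe_endpointsNonadjacent (spread f a) (2 * i).succ_pos, hodd]
  · exact (tendsto_add_atTop_nat 1).comp hf.tendsto_atTop
  · refine ha.mono fun i hi => ?_
    simp [probLe_endpointsNonadjacent (spread f a) (2 * i + 1).succ_pos, f,
      spread_apply hf, hi]

end Spread

section SparsePositions

variable {a : ℕ → I}

lemma exists_strictMono_sum_pow_le (ha : ∀ i, 0 < a i) {δ : ℝ} (hδ : 0 < δ) :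
    ∃ r : ℕ → ℕ, StrictMono r ∧ ∀ s : Finset ℕ, ∑ j ∈ s, (1 - a j : ℝ) ^ (r j + 1) ≤ δ := by
  have eventually_le (j : ℕ) :
      ∀ᶠ N : ℕ in atTop, (1 - a j : ℝ) ^ (N + 1) ≤ δ / 2 / 2 ^ j := by
    have htendsto := (tendsto_pow_atTop_nhds_zero_of_lt_one (unitInterval.one_minus_nonneg (a j))
      (sub_lt_self 1 (unitInterval.coe_pos.2 (ha j)))).comp (tendsto_add_atTop_nat 1)
    exact htendsto.eventually_le_const (by positivity)
  obtain ⟨r, hr, hr_le⟩ := extraction_forall_of_eventually eventually_le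
  refine ⟨r, hr, fun s => (Finset.sum_le_sum fun j _ => hr_le j).trans ?_⟩
  exact sum_le_hasSum s (fun _ _ => by positivity) (hasSum_geometric_two' δ)

lemma exists_forall_le_one_sub (a : ℕ → I) (i : ℕ) :
    ∃ c : ℝ, 0 < c ∧ c ≤ 1 ∧ ∀ l ≤ i, a l < 1 → c ≤ 1 - a l := by
  have small {b : ℝ} (hb : 0 < b) : ∀ᶠ c : ℝ in nhdsWithin 0 (Set.Ioi 0), c ≤ b :=
    (eventually_le_nhds hb).filter_mono nhdsWithin_le_nhds
  have small_one_sub : ∀ᶠ c : ℝ in nhdsWithin 0 (Set.Ioi 0), ∀ l ≤ i, a l < 1 → c ≤ 1 - a l :=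
    (Set.finite_Iic i).eventually_all.2 fun l _ => eventually_imp_distrib_left.2 fun hl =>
      small (sub_pos.2 hl)
  exact (eventually_mem_nhdsWithin.and ((small one_pos).and small_one_sub)).exists

lemma exists_pow_one_sub_pow_le {c δ : ℝ} (hc : 0 < c) (hδ : 0 < δ) (N : ℕ) :
    ∃ T : ℕ, (1 - c ^ N) ^ T ≤ δ := by
  obtain ⟨T, hT⟩ := exists_pow_lt_of_lt_one hδ (sub_lt_self 1 (pow_pos hc N))
  exact ⟨T, hT.le⟩

lemma exists_strictMono_positions {r : ℕ → ℕ} (hr : StrictMono r) (T : ℕ → ℕ → ℕ) :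
    ∃ f : ℕ → ℕ, StrictMono f ∧ 0 < f 0 ∧ ∀ N j, N ≤ j →
      T j (f j) * f j + 3 * (f N + 1 + r (N + 1)) + r (j + 2) ≤ f (j + 1) := by
  obtain ⟨f, hf, hf0, hf_succ⟩ := exists_strictMono_forall_le_succ fun j L =>
    T j L * L + 3 * (L + 1 + r (j + 1)) + r (j + 2)
  refine ⟨f, hf, hf0, fun N j hNj => le_trans ?_ (hf_succ j)⟩
  gcongr
  · exact hf.monotone hNj
  · exact hr.monotone (by omega)

variable {f r : ℕ → ℕ} {k j₀ i : ℕ}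

lemma one_sub_le_graphMeasure_spread_real_hasCentralCut (hf : StrictMono f) (hk : 0 < k)
    (hfk : ∀ j < j₀, f j < k) {T : ℕ} (hT : 3 * k + T * f i < f (i + 1)) {c : ℝ} (hc : 0 ≤ c)
    (hc1 : c ≤ 1) (hac : ∀ l, j₀ ≤ l → l ≤ i → c ≤ 1 - a l) :
    1 - (1 - c ^ (f i + 1) ^ 2) ^ T ≤
      (graphMeasure (spread f a) (f (i + 1))).real {ω | HasCentralCut k ω} := by
  refine one_sub_le_graphMeasure_real_hasCentralCut _ hk hT hc hc1 (fun d hkd hdi => ?_)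
    fun d => spread_eq_zero_of_lt_of_lt hf
  by_cases hd : ∃ l, f l = d
  · obtain ⟨l, rfl⟩ := hd
    rw [spread_apply hf]
    exact hac l (not_lt.1 fun hl => (hfk l hl).not_ge hkd) (hf.le_iff_le.1 hdi)
  · simpa [spread_eq_zero (not_exists.1 hd)] using hc1

lemma graphMeasure_spread_real_hasCentralCut_le (hf : StrictMono f) (hf0 : 0 < f 0)
    (hr : Monotone r) (hij : j₀ ≤ i) (hk : r j₀ ≤ k)
    (hoverlap : ∀ j, j₀ ≤ j → r (j + 1) + k ≤ f j) :
    (graphMeasure (spread f a) (f i + r i + 1)).real {ω | HasCentralCut k ω} ≤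
      2 * ∑ j ∈ Finset.Icc j₀ i, (1 - a j : ℝ) ^ (r j + 1) := by
  have hn : f i + r i + 1 + k ≤ 2 * f i + 2 := by
    have := hoverlap i hij
    have := hr (Nat.le_add_right i 1)
    omega
  have hfit : ∀ j ∈ Finset.Icc j₀ i, f j + r j < f i + r i + 1 := fun j hj =>
    have hji := (Finset.mem_Icc.1 hj).2
    Nat.lt_succ_of_le (add_le_add (hf.monotone hji) (hr hji))
  have hpos (j : ℕ) : 0 < f j := hf0.trans_le (hf.monotone j.zero_le)
  simpa only [spread_apply hf] using
    graphMeasure_real_hasCentralCut_le (spread f a) hij hk hoverlap hn hpos hfit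

lemma limsup_probLe_centralCutSentence_eq_one (hf : StrictMono f) (hk : 0 < k)
    (hfk : ∀ j < j₀, f j < k) {T : ℕ → ℕ} (hT : ∀ i, j₀ ≤ i → 3 * k + T i * f i < f (i + 1))
    {c : ℕ → ℝ} (hc : ∀ i, 0 ≤ c i) (hc1 : ∀ i, c i ≤ 1)
    (hac : ∀ i l, j₀ ≤ l → l ≤ i → c i ≤ 1 - a l)
    (hcT : Tendsto (fun i => (1 - c i ^ (f i + 1) ^ 2) ^ T i) atTop (nhds 0)) :
    limsup (fun n => ProbLe (fun j => spread f a j) n (centralCutSentence k)) atTop = 1 := by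
  have hbounds := fun n => probLe_mem_unitInterval (spread f a) n (centralCutSentence k)
  have hcT' : Tendsto (fun i => 1 - (1 - c i ^ (f i + 1) ^ 2) ^ T i) atTop (nhds 1) := by
    simpa using hcT.const_sub 1
  refine limsup_eq_one_of_tendsto_comp hbounds
    (hf.tendsto_atTop.comp (tendsto_add_atTop_nat 1)) ?_
  refine tendsto_of_tendsto_of_tendsto_of_le_of_le' hcT' tendsto_const_nhds ?_
    (.of_forall fun i => (hbounds _).2)
  filter_upwards [eventually_ge_atTop j₀] with i hi
  rw [Function.comp_apply, probLe_centralCutSentence _ hk]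
  exact one_sub_le_graphMeasure_spread_real_hasCentralCut hf hk hfk (hT i hi) (hc i) (hc1 i) (hac i)

lemma liminf_probLe_centralCutSentence_le (hf : StrictMono f) (hf0 : 0 < f 0) (hr : Monotone r)
    (hk : 0 < k) (hrk : r j₀ ≤ k) (hoverlap : ∀ j, j₀ ≤ j → r (j + 1) + k ≤ f j) {ε : ℝ}
    (hsum : ∀ s : Finset ℕ, 2 * ∑ j ∈ s, (1 - a j : ℝ) ^ (r j + 1) ≤ ε) :
    liminf (fun n => ProbLe (fun j => spread f a j) n (centralCutSentence k)) atTop ≤ ε := by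
  refine liminf_le_of_frequently_comp_le (fun n => (probLe_mem_unitInterval _ n _).1)
    (m := fun i => f i + r i + 1) (tendsto_atTop_mono (fun i => by omega) hf.tendsto_atTop)
    (Eventually.frequently ?_)
  filter_upwards [eventually_ge_atTop j₀] with i hi
  rw [probLe_centralCutSentence _ hk]
  exact (graphMeasure_spread_real_hasCentralCut_le hf hf0 hr hi hrk hoverlap).trans (hsum _)

lemma exists_spread_of_eventually_lt_one (ha0 : ∀ i, 0 < a i) (ha1 : ∀ᶠ i in atTop, a i < 1)
    {ε : ℝ} (hε : 0 < ε) :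
    ∃ (f : ℕ → ℕ) (ψ : Lle.Sentence), StrictMono f ∧ 1 ≤ f 0 ∧
      limsup (fun n => ProbLe (fun j => spread f a j) n ψ) atTop = 1 ∧
      liminf (fun n => ProbLe (fun j => spread f a j) n ψ) atTop ≤ ε := by
  obtain ⟨N, hN⟩ := eventually_atTop.1 ha1
  obtain ⟨r, hr, hr_sum⟩ := exists_strictMono_sum_pow_le ha0 (half_pos hε)
  choose c hc0 hc1 hc_le using exists_forall_le_one_sub a
  choose T hT using fun i L : ℕ =>
    exists_pow_one_sub_pow_le (hc0 i) (Nat.one_div_pos_of_nat (n := i) (α := ℝ)) ((L + 1) ^ 2)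
  obtain ⟨f, hf, hf0, growth⟩ := exists_strictMono_positions hr T
  have hfk : ∀ j < N + 1, f j < f N + 1 + r (N + 1) := fun j hj => by
    have := hf.monotone (Nat.le_of_lt_succ hj)
    omega
  have hoverlap : ∀ j, N + 1 ≤ j → r (j + 1) + (f N + 1 + r (N + 1)) ≤ f j := by
    intro j hj
    obtain ⟨j, rfl⟩ := Nat.exists_eq_add_of_le' (Nat.one_le_of_lt hj)
    have := growth N j (by omega)
    change r (j + 2) + _ ≤ _
    omega
  have hcT : Tendsto (fun i => (1 - c i ^ (f i + 1) ^ 2) ^ T i (f i)) atTop (nhds 0) :=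
    squeeze_zero (fun i => pow_nonneg (sub_nonneg.2 (pow_le_one₀ (hc0 i).le (hc1 i))) _)
      (fun i => hT i (f i)) tendsto_one_div_add_atTop_nhds_zero_nat
  refine ⟨f, centralCutSentence (f N + 1 + r (N + 1)), hf, hf0, ?_, ?_⟩
  · refine limsup_probLe_centralCutSentence_eq_one hf (by omega) hfk (fun i hi => ?_)
      (fun i => (hc0 i).le) hc1 (fun i l hNl hli => ?_) hcT
    · have := growth N i (Nat.le_of_succ_le hi)
      have := hr.le_apply (x := i + 2)
      omega
    · exact hc_le i l hli (hN l (Nat.le_of_succ_le hNl))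
  · refine liminf_probLe_centralCutSentence_le hf hf0 hr.monotone (by omega) (by omega) hoverlap
      fun s => ?_
    linarith [hr_sum s]

end SparsePositions

/-- For every sequence `ā` with `0 < a i ≤ 1` and every `ε > 0` there are a
sequence `p̄` obtained from `ā` by inserting zero terms (the `i`-th term of `ā` being placed
at position `f i` for a strictly increasing `f`) and a sentence `ψ` of `L≤` with
`limsup Prob(n, p̄; ψ) = 1` and `liminf Prob(n, p̄; ψ) ≤ ε`. -/
theorem statement_8 (a : ℕ → ℝ) (ha : ∀ i, 0 < a i ∧ a i ≤ 1) (ε : ℝ) (hε : 0 < ε) :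
    ∃ (f : ℕ → ℕ) (p : ℕ → ℝ) (ψ : Lle.Sentence),
      StrictMono f ∧ 1 ≤ f 0 ∧
      (∀ i, p (f i) = a i) ∧
      (∀ j, (∀ i, f i ≠ j) → p j = 0) ∧
      limsup (fun n => ProbLe p n ψ) atTop = 1 ∧
      liminf (fun n => ProbLe p n ψ) atTop ≤ ε := by
  lift a to ℕ → I using fun i => ⟨(ha i).1.le, (ha i).2⟩
  have ha0 (i : ℕ) : 0 < a i := unitInterval.coe_pos.1 (ha i).1
  obtain ⟨f, ψ, hf, hf0, hlimsup, hliminf⟩ : ∃ (f : ℕ → ℕ) (ψ : Lle.Sentence),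
      StrictMono f ∧ 1 ≤ f 0 ∧
      limsup (fun n => ProbLe (fun j => spread f a j) n ψ) atTop = 1 ∧
      liminf (fun n => ProbLe (fun j => spread f a j) n ψ) atTop ≤ ε := by
    by_cases hone : ∃ᶠ i in atTop, a i = 1
    · obtain ⟨f, ψ, hf, hf0, hlimsup, hliminf⟩ := exists_spread_of_frequently_eq_one hone
      exact ⟨f, ψ, hf, hf0, hlimsup, hliminf.trans hε.le⟩
    · exact exists_spread_of_eventually_lt_one ha0
        ((not_frequently.1 hone).mono fun i hi => unitInterval.lt_one_iff_ne_one.2 hi) hε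
  exact ⟨f, fun j => spread f a j, ψ, hf, hf0,
    fun i => congrArg Subtype.val (spread_apply hf i),
    fun j hj => congrArg Subtype.val (spread_eq_zero hj), hlimsup, hliminf⟩

end RandomGraph
end

section
/- Let p̄ = (p(1), p(2), …) satisfy 0 ≤ p(i) < 1 and ∏_{i=1}^∞ (1 − p(i)) > 0, and let {ψ_α}_{α∈A} be a finite set of first-order sentences of the language L_≤. Then there exist a subset A′ ⊆ A, a constant ε > 0, and a natural number N such that for all n > N the probability that G(n,p̄) satisfies ψ_α for every α ∈ A′ and satisfies ¬ψ_α for every α ∈ A \ A′ is larger than ε. -/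
open FirstOrder Filter

namespace RandomGraph

/-!
Two ordered graphs have the same rank-`k` type if Duplicator wins the `k`-round
Ehrenfeucht–Fraïssé game between them; they then satisfy the same sentences of quantifier rank at
most `k`. There are finitely many rank-`k` types, and placing one graph after another, without edges
between the two, makes them a monoid. This monoid is aperiodic, because the `n`-fold sums of a graph
are indistinguishable in `k` rounds once `2 ^ k ≤ n + 1`. A finite aperiodic monoid contains an
element `u` with `u * x * u = u` for all `x`; take such a `u` among the types of graphs of positive
probability, realised by a graph `υ` on `m` vertices. With probability bounded below independently
of `n`, both the first and the last `m` vertices of `G(n, p̄)` span a copy of `υ` and no edge leaves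
either of these two blocks, since the vertices of a block have no edges to a given side with
probability at least `c ^ m`, where `c = ∏ (1 - p i)`. Whatever the graph in the middle, `G(n, p̄)`
then has type `u`, and `u` decides all the given sentences.
-/

universe u v w

section AperiodicMonoid

variable {M : Type*} [Monoid M]

theorem pow_mul_mul_pow_eq {a u b : M} (h : a * u * b = u) (n : ℕ) : a ^ n * u * b ^ n = u := by
  induction n with
  | zero => simp
  | succ n ih =>
    calc a ^ (n + 1) * u * b ^ (n + 1) = a ^ n * (a * u * b) * b ^ n := by
          rw [pow_succ a, pow_succ' b]; simp only [mul_assoc]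
      _ = u := by rw [h, ih]

theorem mul_right_eq_of_mul_mul_eq {a u b : M} {n : ℕ} (hb : b ^ n = b ^ (n + 1))
    (h : a * u * b = u) : u * b = u :=
  calc u * b = a ^ n * u * b ^ n * b := by rw [pow_mul_mul_pow_eq h]
    _ = a ^ n * u * b ^ n := by rw [mul_assoc _ (b ^ n), ← pow_succ, ← hb]
    _ = u := pow_mul_mul_pow_eq h n

theorem mul_left_eq_of_mul_mul_eq {a u b : M} {n : ℕ} (ha : a ^ n = a ^ (n + 1))
    (h : a * u * b = u) : a * u = u :=
  calc a * u = a * (a ^ n * u * b ^ n) := by rw [pow_mul_mul_pow_eq h]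
    _ = a ^ n * u * b ^ n := by simp only [← mul_assoc, ← pow_succ', ← ha]
    _ = u := pow_mul_mul_pow_eq h n

/-- Any `u` generating a minimal two-sided ideal works: `u` is then a multiple of `u * x * u`. -/
theorem exists_forall_mul_mul_eq_self [Finite M] (aperiodic : ∀ x : M, ∃ n, x ^ n = x ^ (n + 1)) :
    ∃ u : M, ∀ x, u * x * u = u := by
  let ideal (u : M) : Set M := Set.range fun q : M × M ↦ q.1 * u * q.2
  obtain ⟨u, -, minimal⟩ := exists_minimalFor_of_wellFoundedLT (fun _ ↦ True) ideal ⟨1, trivial⟩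
  refine ⟨u, fun x ↦ ?_⟩
  have ideal_subset : ideal (u * x * u) ⊆ ideal u := by
    rintro _ ⟨⟨a, b⟩, rfl⟩
    exact ⟨(a, x * u * b), by simp only [mul_assoc]⟩
  obtain ⟨⟨a, b⟩, hab : a * (u * x * u) * b = u⟩ : u ∈ ideal (u * x * u) :=
    minimal trivial ideal_subset ⟨(1, 1), by simp⟩
  obtain ⟨m, hm⟩ := aperiodic (a * u * x)
  obtain ⟨n, hn⟩ := aperiodic (x * u)
  have absorb_left : a * u * x * u = u :=
    mul_left_eq_of_mul_mul_eq hm (by simpa only [mul_assoc] using hab)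
  rw [mul_assoc]
  exact mul_right_eq_of_mul_mul_eq (a := a) hn (by simpa only [mul_assoc] using absorb_left)

end AperiodicMonoid

section EhrenfeuchtGame

variable (L : FirstOrder.Language.{u, v}) {M N P : Type*} [L.Structure M] [L.Structure N]
  [L.Structure P] {k : ℕ}

/-- The pairs in `S` match up elements of `M` and `N` that satisfy the same equalities and the same
relations of `L`. Function symbols are ignored, so this is the usual notion of a partial isomorphism
for relational languages. -/
structure IsPartialIso (S : SetRel M N) : Prop where
  eq_iff : ∀ s ∈ S, ∀ t ∈ S, (s.1 = t.1 ↔ s.2 = t.2)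
  relMap_iff : ∀ {n} (R : L.Relations n) (x : Fin n → M) (y : Fin n → N),
    (∀ i, (x i, y i) ∈ S) → (Language.Structure.RelMap R x ↔ Language.Structure.RelMap R y)

/-- Duplicator wins the `k`-round Ehrenfeucht–Fraïssé game between `M` and `N` from the position in
which the pairs in `S` have already been chosen. -/
def DuplicatorWins : ℕ → SetRel M N → Prop
  | 0, S => IsPartialIso L S
  | k + 1, S => IsPartialIso L S ∧ (∀ x, ∃ y, DuplicatorWins k (insert (x, y) S)) ∧
      ∀ y, ∃ x, DuplicatorWins k (insert (x, y) S)

variable {L}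

theorem IsPartialIso.anti {S T : SetRel M N} (hT : IsPartialIso L T) (hST : S ⊆ T) :
    IsPartialIso L S where
  eq_iff s hs t ht := hT.eq_iff s (hST hs) t (hST ht)
  relMap_iff R x y hxy := hT.relMap_iff R x y fun i ↦ hST (hxy i)

theorem IsPartialIso.inv {S : SetRel M N} (hS : IsPartialIso L S) : IsPartialIso L S.inv where
  eq_iff s hs t ht := (hS.eq_iff s.swap hs t.swap ht).symm
  relMap_iff R x y hxy := (hS.relMap_iff R y x hxy).symm

theorem IsPartialIso.comp {S : SetRel M N} {T : SetRel N P} (hS : IsPartialIso L S)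
    (hT : IsPartialIso L T) : IsPartialIso L (S.comp T) where
  eq_iff := by
    rintro s ⟨y, hsy, hys⟩ t ⟨z, htz, hzt⟩
    exact (hS.eq_iff _ hsy _ htz).trans (hT.eq_iff _ hys _ hzt)
  relMap_iff R x z hxz := by
    choose y hxy hyz using hxz
    exact (hS.relMap_iff R x y hxy).trans (hT.relMap_iff R y z hyz)

theorem isPartialIso_graph (f : M ≃[L] N) : IsPartialIso L (Function.graph f) where
  eq_iff := by
    rintro ⟨x, _⟩ ⟨⟩ ⟨y, _⟩ ⟨⟩
    exact f.injective.eq_iff.symm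
  relMap_iff R x y hxy := by
    obtain rfl : f ∘ x = y := funext hxy
    exact (f.map_rel R x).symm

namespace DuplicatorWins

theorem isPartialIso {S : SetRel M N} (hS : DuplicatorWins L k S) : IsPartialIso L S := by
  cases k with
  | zero => exact hS
  | succ k => exact hS.1

theorem anti {S T : SetRel M N} (hT : DuplicatorWins L k T) (hST : S ⊆ T) :
    DuplicatorWins L k S := by
  induction k generalizing S T with
  | zero => exact IsPartialIso.anti hT hST
  | succ k ih =>
    obtain ⟨hT, forth, back⟩ := hT
    have insert_subset (s : M × N) : insert s S ⊆ insert s T := Set.insert_subset_insert hST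
    exact ⟨hT.anti hST, fun x ↦ (forth x).imp fun y hy ↦ ih hy (insert_subset _),
      fun y ↦ (back y).imp fun x hx ↦ ih hx (insert_subset _)⟩

theorem of_succ {S : SetRel M N} (hS : DuplicatorWins L (k + 1) S) : DuplicatorWins L k S := by
  induction k generalizing S with
  | zero => exact hS.1
  | succ k ih =>
    obtain ⟨hS, forth, back⟩ := hS
    exact ⟨hS, fun x ↦ (forth x).imp fun y ↦ ih, fun y ↦ (back y).imp fun x ↦ ih⟩

theorem inv {S : SetRel M N} (hS : DuplicatorWins L k S) : DuplicatorWins L k S.inv := by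
  induction k generalizing S with
  | zero => exact IsPartialIso.inv hS
  | succ k ih =>
    obtain ⟨hS, forth, back⟩ := hS
    have insert_subset (x : M) (y : N) :
        insert (y, x) S.inv ⊆ SetRel.inv (insert (x, y) S) := by
      rintro t (rfl | ht)
      exacts [Or.inl rfl, Or.inr ht]
    exact ⟨hS.inv, fun y ↦ (back y).imp fun x hx ↦ (ih hx).anti (insert_subset x y),
      fun x ↦ (forth x).imp fun y hy ↦ (ih hy).anti (insert_subset x y)⟩

theorem comp {S : SetRel M N} {T : SetRel N P} (hS : DuplicatorWins L k S)
    (hT : DuplicatorWins L k T) : DuplicatorWins L k (S.comp T) := by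
  induction k generalizing S T with
  | zero => exact IsPartialIso.comp hS hT
  | succ k ih =>
    obtain ⟨hS, forthS, backS⟩ := hS
    obtain ⟨hT, forthT, backT⟩ := hT
    have insert_subset (x : M) (y : N) (z : P) :
        insert (x, z) (S.comp T) ⊆ SetRel.comp (insert (x, y) S) (insert (y, z) T) := by
      rintro t (rfl | ⟨c, hSc, hTc⟩)
      exacts [⟨y, Or.inl rfl, Or.inl rfl⟩, ⟨c, Or.inr hSc, Or.inr hTc⟩]
    refine ⟨hS.comp hT, fun x ↦ ?_, fun z ↦ ?_⟩
    · obtain ⟨y, hy⟩ := forthS x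
      obtain ⟨z, hz⟩ := forthT y
      exact ⟨z, (ih hy hz).anti (insert_subset x y z)⟩
    · obtain ⟨y, hy⟩ := backT z
      obtain ⟨x, hx⟩ := backS y
      exact ⟨x, (ih hx hy).anti (insert_subset x y z)⟩

theorem graph (f : M ≃[L] N) : DuplicatorWins L k (Function.graph f) := by
  induction k with
  | zero => exact isPartialIso_graph f
  | succ k ih =>
    have insert_eq {x : M} {y : N} (hxy : f x = y) :
        insert (x, y) (Function.graph f) = Function.graph f := Set.insert_eq_of_mem hxy
    exact ⟨isPartialIso_graph f, fun x ↦ ⟨f x, by rwa [insert_eq rfl]⟩,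
      fun y ↦ ⟨f.symm y, by rwa [insert_eq (f.apply_symm_apply y)]⟩⟩

theorem of_equiv {M' N' : Type*} [L.Structure M'] [L.Structure N'] (f : M ≃[L] M') (g : N ≃[L] N')
    {S : SetRel M N} (hS : DuplicatorWins L k (Prod.map f g '' S : SetRel M' N')) :
    DuplicatorWins L k S := by
  refine (((graph f).comp hS).comp (graph g).inv).anti fun s hs ↦ ?_
  exact ⟨g s.2, ⟨f s.1, rfl, ⟨s, hs, rfl⟩⟩, rfl⟩

end DuplicatorWins

/-- The nesting depth of quantifiers in a formula. -/
def quantifierRank {α : Type*} : {n : ℕ} → L.BoundedFormula α n → ℕ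
  | _, .falsum => 0
  | _, .equal _ _ => 0
  | _, .rel _ _ => 0
  | _, .imp φ ψ => max (quantifierRank φ) (quantifierRank ψ)
  | _, .all φ => quantifierRank φ + 1

theorem realize_term_mem [L.IsRelational] {α : Type*} {S : SetRel M N} {v : α → M} {w : α → N}
    (hvw : ∀ i, (v i, w i) ∈ S) (t : L.Term α) : (t.realize v, t.realize w) ∈ S := by
  cases t with
  | var i => exact hvw i
  | func f _ => exact isEmptyElim f

theorem DuplicatorWins.realize_iff [L.IsRelational] {α : Type*} {n : ℕ}
    {φ : L.BoundedFormula α n} {S : SetRel M N} {v : α → M} {w : α → N} {x : Fin n → M}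
    {y : Fin n → N} (hS : DuplicatorWins L k S) (hφ : quantifierRank φ ≤ k)
    (hmem : ∀ i, (Sum.elim v x i, Sum.elim w y i) ∈ S) : φ.Realize v x ↔ φ.Realize w y := by
  induction φ generalizing k S with
  | falsum => rfl
  | equal t₁ t₂ =>
    exact hS.isPartialIso.eq_iff _ (realize_term_mem hmem t₁) _ (realize_term_mem hmem t₂)
  | rel R ts => exact hS.isPartialIso.relMap_iff R _ _ fun i ↦ realize_term_mem hmem (ts i)
  | imp φ ψ ihφ ihψ =>
    have ⟨hφ, hψ⟩ := max_le_iff.mp hφ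
    exact imp_congr (ihφ hS hφ hmem) (ihψ hS hψ hmem)
  | all φ ih =>
    obtain ⟨k, rfl⟩ := Nat.exists_eq_add_of_le' (Nat.one_le_of_lt hφ)
    have realize_snoc {a b} (hab : DuplicatorWins L k (insert (a, b) S)) :
        φ.Realize v (Fin.snoc x a) ↔ φ.Realize w (Fin.snoc y b) := by
      refine ih hab (Nat.le_of_succ_le_succ hφ) ?_
      rintro (i | i)
      · exact Or.inr (hmem (.inl i))
      · induction i using Fin.lastCases with
        | last => exact Or.inl (by simp)
        | cast i => exact Or.inr (by simpa using hmem (.inr i))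
    constructor
    · intro h b
      obtain ⟨a, ha⟩ := hS.2.2 b
      exact (realize_snoc ha).mp (h a)
    · intro h a
      obtain ⟨b, hb⟩ := hS.2.1 a
      exact (realize_snoc hb).mpr (h b)

theorem DuplicatorWins.realize_sentence_iff [L.IsRelational] {ψ : L.Sentence}
    (h : DuplicatorWins L k (∅ : SetRel M N)) (hψ : quantifierRank ψ ≤ k) : M ⊨ ψ ↔ N ⊨ ψ :=
  h.realize_iff hψ (by rintro (i | i) <;> exact isEmptyElim i)

end EhrenfeuchtGame

section Finiteness

variable {L : FirstOrder.Language.{u, v}} {M N : Type w} [L.Structure M] [L.Structure N] {n : ℕ}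

/-- The equalities and the relations of `L` satisfied by the entries of a tuple. -/
def atomicDiagram (a : Fin n → M) :
    (Fin n → Fin n → Prop) × ((R : Σ m, L.Relations m) → (Fin R.1 → Fin n) → Prop) :=
  (fun i j ↦ a i = a j, fun R x ↦ Language.Structure.RelMap R.2 (a ∘ x))

/-- The position in which the entries of the tuples `a` and `b` have been matched in order. -/
abbrev tuplePosition (a : Fin n → M) (b : Fin n → N) : SetRel M N := Set.range fun i ↦ (a i, b i)

theorem tuplePosition_cons (x : M) (y : N) (a : Fin n → M) (b : Fin n → N) :
    tuplePosition (Fin.cons x a : Fin (n + 1) → M) (Fin.cons y b : Fin (n + 1) → N) =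
      insert (x, y) (tuplePosition a b) := by
  ext s
  simp only [Set.mem_range, Fin.exists_fin_succ, Fin.cons_zero, Fin.cons_succ, Set.mem_insert_iff,
    eq_comm]

theorem isPartialIso_of_atomicDiagram_eq {a : Fin n → M} {b : Fin n → N}
    (hab : atomicDiagram (L := L) a = atomicDiagram b) : IsPartialIso L (tuplePosition a b) where
  eq_iff := by
    rintro _ ⟨i, rfl⟩ _ ⟨j, rfl⟩
    exact (congrFun₂ (congrArg Prod.fst hab) i j).to_iff
  relMap_iff R x y hxy := by
    choose σ hσ using hxy
    obtain rfl : a ∘ σ = x := funext fun i ↦ congrArg Prod.fst (hσ i)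
    obtain rfl : b ∘ σ = y := funext fun i ↦ congrArg Prod.snd (hσ i)
    exact (congrFun₂ (congrArg Prod.snd hab) ⟨_, R⟩ σ).to_iff

variable (L)

theorem exists_finite_game_invariant [Finite (Σ m, L.Relations m)] (k n : ℕ) :
    ∃ (T : Type v) (_ : Finite T) (τ : ∀ (M : Type w) [L.Structure M], (Fin n → M) → T),
      ∀ (M N : Type w) [L.Structure M] [L.Structure N] (a : Fin n → M) (b : Fin n → N),
        τ M a = τ N b → DuplicatorWins L k (tuplePosition a b) := by
  induction k generalizing n with
  | zero =>
    exact ⟨_, inferInstance, fun M _ a ↦ atomicDiagram (L := L) a,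
      fun M N _ _ a b ↦ isPartialIso_of_atomicDiagram_eq⟩
  | succ k ih =>
    obtain ⟨T, _, τ, hτ⟩ := ih (n + 1)
    refine ⟨_, inferInstance,
      fun M _ a ↦ (atomicDiagram (L := L) a, Set.range fun x ↦ τ M (Fin.cons x a)),
      fun M N _ _ a b hab ↦ ?_⟩
    obtain ⟨diagram_eq, range_eq⟩ := Prod.ext_iff.mp hab
    have wins_insert {x y} (hxy : τ M (Fin.cons x a) = τ N (Fin.cons y b)) :
        DuplicatorWins L k (insert (x, y) (tuplePosition a b)) := by
      rw [← tuplePosition_cons]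
      exact hτ _ _ _ _ hxy
    refine ⟨isPartialIso_of_atomicDiagram_eq diagram_eq, fun x ↦ ?_, fun y ↦ ?_⟩
    · obtain ⟨y, hy⟩ := range_eq.subset ⟨x, rfl⟩
      exact ⟨y, wins_insert hy.symm⟩
    · obtain ⟨x, hx⟩ := range_eq.superset ⟨y, rfl⟩
      exact ⟨x, wins_insert hx⟩

/-- Two structures are identified when Duplicator wins the `k`-round game between them. -/
def gameSetoid (k : ℕ) : Setoid (CategoryTheory.Bundled.{w} L.Structure) where
  r M N := DuplicatorWins L k (∅ : SetRel M N)
  iseqv :=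
    { refl M := (DuplicatorWins.graph (Language.Equiv.refl L M)).anti (Set.empty_subset _)
      symm h := h.inv.anti (Set.empty_subset _)
      trans h h' := (h.comp h').anti (Set.empty_subset _) }

instance finite_quotient_gameSetoid [Finite (Σ m, L.Relations m)] (k : ℕ) :
    Finite (Quotient (gameSetoid.{u, v, w} L k)) := by
  obtain ⟨T, _, τ, hτ⟩ := exists_finite_game_invariant.{u, v, w} L k 0
  let invariant (M : CategoryTheory.Bundled.{w} L.Structure) : T := τ M Fin.elim0
  have equiv_of_invariant_eq {M N} (h : invariant M = invariant N) : gameSetoid L k M N :=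
    (hτ M N _ _ h).anti (Set.empty_subset _)
  refine Finite.of_injective (fun q ↦ invariant q.out) fun q r h ↦ ?_
  rw [← q.out_eq, ← r.out_eq]
  exact Quotient.sound (equiv_of_invariant_eq h)

end Finiteness

section OrderedSum

variable {M M' N N' P : Type*} {k : ℕ}

/-- The position in the game on two ordered sums given by positions on the two summands. -/
def sumPosition (S : SetRel M M') (T : SetRel N N') : SetRel (M ⊕ N) (M' ⊕ N') :=
  Prod.map Sum.inl Sum.inl '' S ∪ Prod.map Sum.inr Sum.inr '' T

theorem sumPosition_insert_left (x : M) (x' : M') (S : SetRel M M') (T : SetRel N N') :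
    sumPosition (insert (x, x') S) T = insert (.inl x, .inl x') (sumPosition S T) := by
  rw [sumPosition, Set.image_insert_eq, Set.insert_union]; rfl

theorem sumPosition_insert_right (y : N) (y' : N') (S : SetRel M M') (T : SetRel N N') :
    sumPosition S (insert (y, y') T) = insert (.inr y, .inr y') (sumPosition S T) := by
  rw [sumPosition, Set.image_insert_eq, Set.union_insert]; rfl

instance : Lle.IsRelational := fun _ ↦ inferInstanceAs (IsEmpty Empty)

instance : Finite (Σ n, Lle.Relations n) :=
  Finite.of_surjective (fun b : Bool ↦ ⟨2, bif b then leRel.adj else leRel.le⟩) <| by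
    rintro ⟨_, _ | _⟩
    exacts [⟨true, rfl⟩, ⟨false, rfl⟩]

variable [Lle.Structure M] [Lle.Structure M'] [Lle.Structure N] [Lle.Structure N']
  [Lle.Structure P]

/-- The adjacency relation of an `L≤`-structure. -/
def Adj (x y : M) : Prop := Language.Structure.RelMap (L := Lle) leRel.adj ![x, y]

/-- The order relation of an `L≤`-structure. -/
def Le (x y : M) : Prop := Language.Structure.RelMap (L := Lle) leRel.le ![x, y]

theorem relMap_adj (x : Fin 2 → M) :
    Language.Structure.RelMap (L := Lle) leRel.adj x ↔ Adj (x 0) (x 1) := by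
  rw [Adj, ← List.ofFn_inj.mp (by simp : List.ofFn x = List.ofFn ![x 0, x 1])]

theorem relMap_le (x : Fin 2 → M) :
    Language.Structure.RelMap (L := Lle) leRel.le x ↔ Le (x 0) (x 1) := by
  rw [Le, ← List.ofFn_inj.mp (by simp : List.ofFn x = List.ofFn ![x 0, x 1])]

theorem isPartialIso_of_adj_le {S : SetRel M N}
    (hS : ∀ s ∈ S, ∀ t ∈ S,
      (s.1 = t.1 ↔ s.2 = t.2) ∧ (Adj s.1 t.1 ↔ Adj s.2 t.2) ∧ (Le s.1 t.1 ↔ Le s.2 t.2)) :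
    IsPartialIso Lle S where
  eq_iff s hs t ht := (hS s hs t ht).1
  relMap_iff R x y hxy := by
    cases R with
    | adj => exact (relMap_adj x).trans ((hS _ (hxy 0) _ (hxy 1)).2.1.trans (relMap_adj y).symm)
    | le => exact (relMap_le x).trans ((hS _ (hxy 0) _ (hxy 1)).2.2.trans (relMap_le y).symm)

theorem IsPartialIso.adj_iff {S : SetRel M N} (hS : IsPartialIso Lle S) {s t : M × N}
    (hs : s ∈ S) (ht : t ∈ S) : Adj s.1 t.1 ↔ Adj s.2 t.2 :=
  hS.relMap_iff _ _ _ <| by simp [Fin.forall_fin_two, hs, ht]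

theorem IsPartialIso.le_iff {S : SetRel M N} (hS : IsPartialIso Lle S) {s t : M × N}
    (hs : s ∈ S) (ht : t ∈ S) : Le s.1 t.1 ↔ Le s.2 t.2 :=
  hS.relMap_iff _ _ _ <| by simp [Fin.forall_fin_two, hs, ht]

/-- A bijection preserving adjacency and order is an isomorphism of `L≤`-structures. -/
def equivOfAdjLe (e : M ≃ N) (adj : ∀ x y, Adj (e x) (e y) ↔ Adj x y)
    (le : ∀ x y, Le (e x) (e y) ↔ Le x y) : M ≃[Lle] N where
  toEquiv := e
  map_fun' f := isEmptyElim f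
  map_rel' R x := by
    cases R with
    | adj => exact (relMap_adj _).trans ((adj _ _).trans (relMap_adj x).symm)
    | le => exact (relMap_le _).trans ((le _ _).trans (relMap_le x).symm)

theorem adj_apply_iff (e : M ≃[Lle] N) (x y : M) : Adj (e x) (e y) ↔ Adj x y :=
  ((isPartialIso_graph e).adj_iff (s := (x, e x)) (t := (y, e y)) rfl rfl).symm

theorem le_apply_iff (e : M ≃[Lle] N) (x y : M) : Le (e x) (e y) ↔ Le x y :=
  ((isPartialIso_graph e).le_iff (s := (x, e x)) (t := (y, e y)) rfl rfl).symm

instance : Lle.Structure PEmpty where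
  funMap f := isEmptyElim f
  RelMap _ _ := False

/-- The ordered sum: every element of `M` precedes every element of `N`, and no element of `M` is
adjacent to an element of `N`. -/
instance orderedSum : Lle.Structure (M ⊕ N) where
  funMap f := isEmptyElim f
  RelMap
    | .adj => fun x ↦ Sum.LiftRel Adj Adj (x 0) (x 1)
    | .le => fun x ↦ Sum.Lex Le Le (x 0) (x 1)

theorem adj_sum_iff {x y : M ⊕ N} : Adj x y ↔ Sum.LiftRel Adj Adj x y := Iff.rfl

theorem le_sum_iff {x y : M ⊕ N} : Le x y ↔ Sum.Lex Le Le x y := Iff.rfl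

variable (M N P) in
/-- Associativity of the ordered sum. -/
def orderedSumAssoc : (M ⊕ N) ⊕ P ≃[Lle] M ⊕ (N ⊕ P) :=
  equivOfAdjLe (Equiv.sumAssoc M N P)
    (by rintro ((_ | _) | _) ((_ | _) | _) <;> simp [adj_sum_iff])
    (by rintro ((_ | _) | _) ((_ | _) | _) <;> simp [le_sum_iff])

variable (M N) in
/-- An empty structure is left neutral for the ordered sum. -/
def emptyOrderedSum [IsEmpty M] : M ⊕ N ≃[Lle] N :=
  equivOfAdjLe (Equiv.emptySum M N) (by simp [adj_sum_iff]) (by simp [le_sum_iff])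

variable (M N) in
/-- An empty structure is right neutral for the ordered sum. -/
def orderedSumEmpty [IsEmpty N] : M ⊕ N ≃[Lle] M :=
  equivOfAdjLe (Equiv.sumEmpty M N) (by simp [adj_sum_iff]) (by simp [le_sum_iff])

/-- Isomorphic summands have isomorphic ordered sums. -/
def orderedSumCongr (e : M ≃[Lle] M') (f : N ≃[Lle] N') : M ⊕ N ≃[Lle] M' ⊕ N' :=
  equivOfAdjLe (Equiv.sumCongr e f)
    (by rintro (_ | _) (_ | _) <;> simp [adj_sum_iff, adj_apply_iff])
    (by rintro (_ | _) (_ | _) <;> simp [le_sum_iff, le_apply_iff])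

theorem IsPartialIso.sum {S : SetRel M M'} {T : SetRel N N'} (hS : IsPartialIso Lle S)
    (hT : IsPartialIso Lle T) : IsPartialIso Lle (sumPosition S T) := by
  apply isPartialIso_of_adj_le
  rintro _ (⟨s, hs, rfl⟩ | ⟨s, hs, rfl⟩) _ (⟨t, ht, rfl⟩ | ⟨t, ht, rfl⟩)
  · simp [adj_sum_iff, le_sum_iff, hS.eq_iff s hs t ht, hS.adj_iff hs ht, hS.le_iff hs ht]
  · simp [adj_sum_iff, le_sum_iff]
  · simp [adj_sum_iff, le_sum_iff]
  · simp [adj_sum_iff, le_sum_iff, hT.eq_iff s hs t ht, hT.adj_iff hs ht, hT.le_iff hs ht]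

theorem DuplicatorWins.sum {S : SetRel M M'} {T : SetRel N N'} (hS : DuplicatorWins Lle k S)
    (hT : DuplicatorWins Lle k T) : DuplicatorWins Lle k (sumPosition S T) := by
  induction k generalizing S T with
  | zero => exact IsPartialIso.sum hS hT
  | succ k ih =>
    have answer_left {x x'} (h : DuplicatorWins Lle k (insert (x, x') S)) :
        DuplicatorWins Lle k (insert (.inl x, .inl x') (sumPosition S T)) :=
      sumPosition_insert_left x x' S T ▸ ih h hT.of_succ
    have answer_right {y y'} (h : DuplicatorWins Lle k (insert (y, y') T)) :
        DuplicatorWins Lle k (insert (.inr y, .inr y') (sumPosition S T)) :=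
      sumPosition_insert_right y y' S T ▸ ih hS.of_succ h
    refine ⟨hS.isPartialIso.sum hT.isPartialIso, ?_, ?_⟩
    · rintro (x | y)
      · exact (hS.2.1 x).elim fun x' h ↦ ⟨.inl x', answer_left h⟩
      · exact (hT.2.1 y).elim fun y' h ↦ ⟨.inr y', answer_right h⟩
    · rintro (x' | y')
      · exact (hS.2.2 x').elim fun x h ↦ ⟨.inl x, answer_left h⟩
      · exact (hT.2.2 y').elim fun y h ↦ ⟨.inr y, answer_right h⟩

end OrderedSum

section OrderedPower

variable (X : Type w) [Lle.Structure X] {i j k m n : ℕ}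

/-- The underlying type of the `n`-fold ordered sum `X ⊕ ⋯ ⊕ X`. -/
def OrderedPower : ℕ → Type w
  | 0 => PEmpty
  | n + 1 => X ⊕ OrderedPower n

instance orderedPowerStructure : (n : ℕ) → Lle.Structure (OrderedPower X n)
  | 0 => inferInstanceAs (Lle.Structure PEmpty)
  | n + 1 =>
    have := orderedPowerStructure n
    inferInstanceAs (Lle.Structure (X ⊕ OrderedPower X n))

instance : IsEmpty (OrderedPower X 0) := inferInstanceAs (IsEmpty PEmpty)

theorem nonempty_orderedPower_equiv (i j : ℕ) : Nonempty
    (OrderedPower X (i + (j + 1)) ≃[Lle] OrderedPower X i ⊕ (X ⊕ OrderedPower X j)) := by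
  induction i with
  | zero =>
    rw [Nat.zero_add]
    exact ⟨(emptyOrderedSum (OrderedPower X 0) (X ⊕ OrderedPower X j)).symm⟩
  | succ i ih =>
    obtain ⟨e⟩ := ih
    rw [Nat.succ_add]
    exact ⟨(orderedSumAssoc X (OrderedPower X i) (X ⊕ OrderedPower X j)).symm.comp
      (orderedSumCongr (Language.Equiv.refl Lle X) e)⟩

variable {X}

theorem exists_orderedPower_equiv_apply_eq (x : OrderedPower X n) :
    ∃ i j, i + (j + 1) = n ∧
      ∃ (e : OrderedPower X n ≃[Lle] OrderedPower X i ⊕ (X ⊕ OrderedPower X j)) (x₀ : X),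
        e x = .inr (.inl x₀) := by
  induction n with
  | zero => exact isEmptyElim x
  | succ n ih =>
    rcases x with x₀ | x
    · exact ⟨0, n, Nat.zero_add _,
        (emptyOrderedSum (OrderedPower X 0) (X ⊕ OrderedPower X n)).symm, x₀, rfl⟩
    · obtain ⟨i, j, rfl, e, x₀, hx⟩ := ih x
      refine ⟨i + 1, j, Nat.succ_add _ _,
        (orderedSumAssoc X (OrderedPower X i) (X ⊕ OrderedPower X j)).symm.comp
          (orderedSumCongr (Language.Equiv.refl Lle X) e), x₀, ?_⟩
      change (Equiv.sumAssoc _ _ _).symm (.inr (e x)) = _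
      rw [hx]
      rfl

/-- The lengths `n` and `m` are equal, or both at least `2 ^ k - 1`; in the latter case they cannot
be told apart in `k` rounds. -/
def LengthAgree (k n m : ℕ) : Prop := n = m ∨ 2 ^ k ≤ n + 1 ∧ 2 ^ k ≤ m + 1

theorem LengthAgree.symm (h : LengthAgree k n m) : LengthAgree k m n := h.imp Eq.symm And.symm

theorem LengthAgree.exists_split (h : LengthAgree (k + 1) (i + (j + 1)) m) :
    ∃ i' j', i' + (j' + 1) = m ∧ LengthAgree k i i' ∧ LengthAgree k j j' := by
  unfold LengthAgree at *
  rw [pow_succ] at h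
  have two_pow_pos : 0 < 2 ^ k := Nat.two_pow_pos k
  obtain rfl | ⟨hij, hm⟩ := h
  · exact ⟨i, j, rfl, .inl rfl, .inl rfl⟩
  obtain hi | hi := lt_or_ge (i + 1) (2 ^ k)
  · exact ⟨i, m - (i + 1), by omega, .inl rfl, .inr (by omega)⟩
  obtain hj | hj := lt_or_ge (j + 1) (2 ^ k)
  · exact ⟨m - (j + 1), j, by omega, .inr (by omega), .inl rfl⟩
  · exact ⟨2 ^ k - 1, m - 2 ^ k, by omega, .inr (by omega), .inr (by omega)⟩

theorem exists_orderedPower_answer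
    (ih : ∀ {i i'}, LengthAgree k i i' →
      DuplicatorWins Lle k (∅ : SetRel (OrderedPower X i) (OrderedPower X i')))
    (h : LengthAgree (k + 1) n m) (x : OrderedPower X n) :
    ∃ y : OrderedPower X m, DuplicatorWins Lle k ({(x, y)} : SetRel _ _) := by
  obtain ⟨i, j, rfl, e, x₀, hx⟩ := exists_orderedPower_equiv_apply_eq x
  obtain ⟨i', j', rfl, hi, hj⟩ := h.exists_split
  obtain ⟨e'⟩ := nonempty_orderedPower_equiv X i' j'
  have wins_diagonal : DuplicatorWins Lle k ({(x₀, x₀)} : SetRel X X) :=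
    (DuplicatorWins.graph (Language.Equiv.refl Lle X)).anti (Set.singleton_subset_iff.mpr rfl)
  refine ⟨e'.symm (.inr (.inl x₀)),
    ((ih hi).sum (wins_diagonal.sum (ih hj))).anti ?_ |>.of_equiv e e'⟩
  simp [sumPosition, hx]

theorem duplicatorWins_orderedPower (h : LengthAgree k n m) :
    DuplicatorWins Lle k (∅ : SetRel (OrderedPower X n) (OrderedPower X m)) := by
  induction k generalizing n m with
  | zero => exact isPartialIso_of_adj_le (by simp)
  | succ k ih =>
    refine ⟨isPartialIso_of_adj_le (by simp), fun x ↦ ?_, fun y ↦ ?_⟩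
    · simpa using exists_orderedPower_answer ih h x
    · obtain ⟨x, hx⟩ := exists_orderedPower_answer ih h.symm y
      exact ⟨x, hx.inv.anti (by simp)⟩

end OrderedPower

section RankType

/-- The rank-`k` types of `L≤`-structures: structures with the same type satisfy the same sentences
of quantifier rank at most `k`. Ordered sums make them a monoid. -/
abbrev RankType (k : ℕ) := Quotient (gameSetoid.{0, 0, 0} Lle k)

/-- The rank-`k` type of an `L≤`-structure. -/
def rankType (k : ℕ) (M : Type) [Lle.Structure M] : RankType k :=
  Quotient.mk _ (CategoryTheory.Bundled.of M)

variable {k : ℕ} {M N : Type} [Lle.Structure M] [Lle.Structure N]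

theorem rankType_eq_iff :
    rankType k M = rankType k N ↔ DuplicatorWins Lle k (∅ : SetRel M N) :=
  Quotient.eq

theorem rankType_eq_of_equiv (e : M ≃[Lle] N) : rankType k M = rankType k N :=
  rankType_eq_iff.mpr ((DuplicatorWins.graph e).anti (Set.empty_subset _))

theorem exists_rankType_eq (t : RankType k) :
    ∃ (M : Type) (_ : Lle.Structure M), rankType k M = t :=
  t.inductionOn fun M ↦ ⟨M, M.str, rfl⟩

instance : One (RankType k) := ⟨rankType k PEmpty⟩

instance : Mul (RankType k) :=
  ⟨Quotient.map₂ (fun M N ↦ CategoryTheory.Bundled.of (M ⊕ N))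
    fun _ _ hM _ _ hN ↦ (DuplicatorWins.sum hM hN).anti (Set.empty_subset _)⟩

theorem rankType_sum : rankType k (M ⊕ N) = rankType k M * rankType k N := rfl

theorem rankType_of_isEmpty [IsEmpty M] : rankType k M = 1 :=
  rankType_eq_of_equiv (equivOfAdjLe (Equiv.equivOfIsEmpty M PEmpty) isEmptyElim isEmptyElim)

instance : Monoid (RankType k) where
  mul_assoc s t u := by
    obtain ⟨M, _, rfl⟩ := exists_rankType_eq s
    obtain ⟨N, _, rfl⟩ := exists_rankType_eq t
    obtain ⟨P, _, rfl⟩ := exists_rankType_eq u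
    exact rankType_eq_of_equiv (orderedSumAssoc M N P)
  one_mul t := by
    obtain ⟨M, _, rfl⟩ := exists_rankType_eq t
    exact rankType_eq_of_equiv (emptyOrderedSum PEmpty M)
  mul_one t := by
    obtain ⟨M, _, rfl⟩ := exists_rankType_eq t
    exact rankType_eq_of_equiv (orderedSumEmpty M PEmpty)

theorem rankType_orderedPower (n : ℕ) : rankType k (OrderedPower M n) = rankType k M ^ n := by
  induction n with
  | zero => rw [pow_zero, rankType_of_isEmpty]
  | succ n ih => rw [pow_succ', ← ih]; rfl

theorem exists_pow_eq_pow_succ (t : RankType k) : ∃ n, t ^ n = t ^ (n + 1) := by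
  obtain ⟨M, _, rfl⟩ := exists_rankType_eq t
  refine ⟨2 ^ k, ?_⟩
  rw [← rankType_orderedPower, ← rankType_orderedPower, rankType_eq_iff]
  exact duplicatorWins_orderedPower (.inr (by omega))

end RankType

section Append

variable {m n : ℕ} {ω ω' : Sample m} {η η' : Sample n}

/-- A pair of vertices of `Fin (m + n)` lies in the first block of `m` vertices, or in the last
block of `n` vertices, or crosses from the first to the last. -/
def edgeOfBlocks : EdgeIdx m ⊕ EdgeIdx n ⊕ Fin m × Fin n → EdgeIdx (m + n)
  | .inl e => ⟨(e.1.1.castAdd n, e.1.2.castAdd n), e.2⟩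
  | .inr (.inl e) => ⟨(e.1.1.natAdd m, e.1.2.natAdd m), Nat.add_lt_add_left e.2 m⟩
  | .inr (.inr (a, b)) => ⟨(a.castAdd n, b.natAdd m), Nat.lt_add_right b a.2⟩

theorem edgeOfBlocks_bijective : Function.Bijective (edgeOfBlocks (m := m) (n := n)) := by
  constructor
  · rintro (⟨⟨a, b⟩, h⟩ | ⟨⟨a, b⟩, h⟩ | ⟨a, b⟩) (⟨⟨a', b'⟩, h'⟩ | ⟨⟨a', b'⟩, h'⟩ | ⟨a', b'⟩) <;>
      simp only [edgeOfBlocks, Subtype.mk.injEq, Prod.mk.injEq, Sum.inl.injEq, Sum.inr.injEq,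
        Fin.ext_iff, Fin.val_castAdd, Fin.val_natAdd, reduceCtorEq] <;> omega
  · rintro ⟨⟨v, w⟩, hvw⟩
    induction v using Fin.addCases with
    | left a =>
      induction w using Fin.addCases with
      | left b => exact ⟨.inl ⟨(a, b), hvw⟩, rfl⟩
      | right b => exact ⟨.inr (.inr (a, b)), rfl⟩
    | right a =>
      induction w using Fin.addCases with
      | left b => exact absurd hvw (Nat.lt_add_right a b.2).not_gt
      | right b => exact ⟨.inr (.inl ⟨(a, b), by simpa using hvw⟩), rfl⟩

/-- The equivalence given by `edgeOfBlocks`. -/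
noncomputable def blocksEquiv (m n : ℕ) : EdgeIdx m ⊕ EdgeIdx n ⊕ Fin m × Fin n ≃ EdgeIdx (m + n) :=
  Equiv.ofBijective _ edgeOfBlocks_bijective

/-- The graph `ω` followed by the graph `η`, with no edges between the two. -/
noncomputable def append (ω : Sample m) (η : Sample n) : Sample (m + n) :=
  Sum.elim ω (Sum.elim η fun _ ↦ false) ∘ (blocksEquiv m n).symm

theorem append_blocksEquiv (e : EdgeIdx m ⊕ EdgeIdx n ⊕ Fin m × Fin n) :
    append ω η (blocksEquiv m n e) = Sum.elim ω (Sum.elim η fun _ ↦ false) e := by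
  rw [append, Function.comp_apply, Equiv.symm_apply_apply]

theorem append_inj (h : append ω η = append ω' η') : ω = ω' ∧ η = η' := by
  have elim_eq := (blocksEquiv m n).symm.surjective.injective_comp_right h
  exact ⟨congrArg (· ∘ Sum.inl) elim_eq, congrArg (· ∘ Sum.inr ∘ Sum.inl) elim_eq⟩

theorem adjVal_append_iff {a b : ℕ} :
    adjVal (append ω η) a b ↔ adjVal ω a b ∨ ∃ e : EdgeIdx n, η e = true ∧
      ((m + e.1.1.val = a ∧ m + e.1.2.val = b) ∨ (m + e.1.1.val = b ∧ m + e.1.2.val = a)) := by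
  rw [adjVal, ← (blocksEquiv m n).exists_congr_right]
  simp only [Sum.exists, append_blocksEquiv, Sum.elim_inl, Sum.elim_inr, Bool.false_eq_true,
    false_and, exists_false, or_false]
  rfl

theorem adjVal_lt {a b : ℕ} (h : adjVal ω a b) : a < m ∧ b < m := by
  obtain ⟨e, -, h⟩ := h
  omega

theorem sampleAdj_append_iff (x y : Fin m ⊕ Fin n) :
    sampleAdj (append ω η) (finSumFinEquiv x) (finSumFinEquiv y) ↔
      Sum.LiftRel (sampleAdj ω) (sampleAdj η) x y := by
  rw [sampleAdj, adjVal_append_iff]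
  rcases x with x | x <;> rcases y with y | y <;>
    simp only [finSumFinEquiv_apply_left, finSumFinEquiv_apply_right, Fin.val_castAdd,
      Fin.val_natAdd, Nat.add_left_cancel_iff, Sum.liftRel_inl_inl, Sum.liftRel_inr_inr,
      Sum.not_liftRel_inl_inr, Sum.not_liftRel_inr_inl, iff_false]
  · exact or_iff_left (by rintro ⟨e, -, h⟩; omega)
  · rintro (h | ⟨e, -, h⟩)
    exacts [by have := adjVal_lt h; omega, by omega]
  · rintro (h | ⟨e, -, h⟩)
    exacts [by have := adjVal_lt h; omega, by omega]
  · exact or_iff_right fun h ↦ by have := adjVal_lt h; omega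

theorem finSumFinEquiv_le_iff (x y : Fin m ⊕ Fin n) :
    finSumFinEquiv x ≤ finSumFinEquiv y ↔
      Sum.Lex (α := Fin m) (β := Fin n) (· ≤ ·) (· ≤ ·) x y := by
  rcases x with x | x <;> rcases y with y | y
  · rw [Sum.lex_inl_inl]; rfl
  · exact iff_of_true (Nat.le_add_right_of_le x.2.le) (.sep x y)
  · exact iff_of_false (Nat.lt_add_right x y.2).not_ge Sum.lex_inr_inl
  · rw [Sum.lex_inr_inr]; exact Nat.add_le_add_iff_left

/-- The vertices of the outcome `ω`, carrying its `L≤`-structure. -/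
def Vertices (_ : Sample n) : Type := Fin n

instance (ω : Sample n) : Lle.Structure (Vertices ω) := leStructure ω

/-- The graph `append ω η` is the ordered sum of `ω` and `η`. -/
noncomputable def appendEquiv (ω : Sample m) (η : Sample n) :
    Vertices ω ⊕ Vertices η ≃[Lle] Vertices (append ω η) :=
  equivOfAdjLe finSumFinEquiv sampleAdj_append_iff finSumFinEquiv_le_iff

theorem rankType_append (k : ℕ) (ω : Sample m) (η : Sample n) :
    rankType k (Vertices (append ω η)) = rankType k (Vertices ω) * rankType k (Vertices η) := by
  rw [← rankType_eq_of_equiv (appendEquiv ω η), rankType_sum]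

end Append

section Weight

variable {p : ℕ → ℝ} {m n : ℕ}

theorem sampleWeight_nonneg (hp₀ : ∀ i, 0 ≤ p i) (hp₁ : ∀ i, p i < 1) (ω : Sample n) :
    0 ≤ sampleWeight p ω := by
  refine Finset.prod_nonneg fun e _ ↦ ?_
  split_ifs
  exacts [hp₀ _, sub_nonneg.mpr (hp₁ _).le]

theorem sum_sampleWeight (p : ℕ → ℝ) (n : ℕ) : ∑ ω : Sample n, sampleWeight p ω = 1 := by
  let weight (e : EdgeIdx n) (b : Bool) : ℝ :=
    if b then p (e.1.2.val - e.1.1.val) else 1 - p (e.1.2.val - e.1.1.val)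
  calc ∑ ω : Sample n, sampleWeight p ω = ∏ e, ∑ b, weight e b := (Fintype.prod_sum weight).symm
    _ = 1 := by simp [weight]

/-- The probability that `G(m + n, p̄)` has no edges between the first `m` and the last `n`
vertices. -/
noncomputable def crossWeight (p : ℕ → ℝ) (m n : ℕ) : ℝ :=
  ∏ a : Fin m, ∏ b : Fin n, (1 - p (m + b - a))

theorem sampleWeight_append (p : ℕ → ℝ) (ω : Sample m) (η : Sample n) :
    sampleWeight p (append ω η) = sampleWeight p ω * sampleWeight p η * crossWeight p m n := by
  rw [sampleWeight, ← (blocksEquiv m n).prod_comp]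
  simp only [Fintype.prod_sum_type, Fintype.prod_prod_type, append_blocksEquiv, Sum.elim_inl,
    Sum.elim_inr, Bool.false_eq_true, if_false]
  simp only [blocksEquiv, Equiv.ofBijective_apply, edgeOfBlocks, Fin.val_castAdd, Fin.val_natAdd,
    Nat.add_sub_add_left, mul_assoc, sampleWeight, crossWeight]

theorem crossWeight_pos (hp₁ : ∀ i, p i < 1) (m n : ℕ) : 0 < crossWeight p m n :=
  Finset.prod_pos fun _ _ ↦ Finset.prod_pos fun _ _ ↦ sub_pos.mpr (hp₁ _)

theorem le_prod_one_sub_of_injective {ι : Type*} [Fintype ι] {c : ℝ} (hp₀ : ∀ i, 0 ≤ p i)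
    (hp₁ : ∀ i, p i < 1) (hc : ∀ n, c ≤ ∏ i ∈ Finset.Icc 1 n, (1 - p i)) {d : ι → ℕ}
    (d_injective : Function.Injective d) (one_le_d : ∀ i, 1 ≤ d i) : c ≤ ∏ i, (1 - p (d i)) := by
  have image_subset : Finset.univ.image d ⊆ Finset.Icc 1 (Finset.univ.sup d) := by
    simpa [Finset.subset_iff] using fun i ↦ ⟨one_le_d i, Finset.le_sup (Finset.mem_univ i)⟩
  calc c ≤ ∏ i ∈ Finset.Icc 1 (Finset.univ.sup d), (1 - p i) := hc _
    _ ≤ ∏ i ∈ Finset.univ.image d, (1 - p i) :=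
      Finset.prod_le_prod_of_subset_of_le_one image_subset
        (fun i _ ↦ sub_nonneg.mpr (hp₁ i).le) fun i _ _ ↦ sub_le_self _ (hp₀ i)
    _ = ∏ i, (1 - p (d i)) := Finset.prod_image d_injective.injOn

theorem pow_left_le_crossWeight {c : ℝ} (hp₀ : ∀ i, 0 ≤ p i) (hp₁ : ∀ i, p i < 1)
    (hc₀ : 0 ≤ c) (hc : ∀ n, c ≤ ∏ i ∈ Finset.Icc 1 n, (1 - p i)) (m n : ℕ) :
    c ^ m ≤ crossWeight p m n := by
  have row_le (a : Fin m) : c ≤ ∏ b : Fin n, (1 - p (m + b - a)) :=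
    le_prod_one_sub_of_injective hp₀ hp₁ hc (fun b b' h ↦ by omega) fun b ↦ by omega
  calc c ^ m = ∏ _a : Fin m, c := by simp
    _ ≤ crossWeight p m n := Finset.prod_le_prod (fun _ _ ↦ hc₀) fun a _ ↦ row_le a

theorem pow_right_le_crossWeight {c : ℝ} (hp₀ : ∀ i, 0 ≤ p i) (hp₁ : ∀ i, p i < 1)
    (hc₀ : 0 ≤ c) (hc : ∀ n, c ≤ ∏ i ∈ Finset.Icc 1 n, (1 - p i)) (m n : ℕ) :
    c ^ n ≤ crossWeight p m n := by
  have column_le (b : Fin n) : c ≤ ∏ a : Fin m, (1 - p (m + b - a)) :=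
    le_prod_one_sub_of_injective hp₀ hp₁ hc (fun a a' h ↦ by omega) fun a ↦ by omega
  calc c ^ n = ∏ _b : Fin n, c := by simp
    _ ≤ ∏ b : Fin n, ∏ a : Fin m, (1 - p (m + b - a)) :=
      Finset.prod_le_prod (fun _ _ ↦ hc₀) fun b _ ↦ column_le b
    _ = crossWeight p m n := Finset.prod_comm

theorem sq_mul_sampleWeight_le_sandwich {c : ℝ} (hp₀ : ∀ i, 0 ≤ p i) (hp₁ : ∀ i, p i < 1)
    (hc₀ : 0 ≤ c) (hc : ∀ n, c ≤ ∏ i ∈ Finset.Icc 1 n, (1 - p i))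
    (ω : Sample m) (η : Sample n) :
    (sampleWeight p ω * c ^ m) ^ 2 * sampleWeight p η ≤
      sampleWeight p (append ω (append η ω)) := by
  have hω := sampleWeight_nonneg hp₀ hp₁ ω
  have hη := sampleWeight_nonneg hp₀ hp₁ η
  have cross_nonneg := (crossWeight_pos hp₁ n m).le
  calc (sampleWeight p ω * c ^ m) ^ 2 * sampleWeight p η
      = sampleWeight p ω * (sampleWeight p η * sampleWeight p ω * c ^ m) * c ^ m := by ring
    _ ≤ sampleWeight p ω * (sampleWeight p η * sampleWeight p ω * crossWeight p n m) *
          crossWeight p m (n + m) := by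
        gcongr
        · exact pow_right_le_crossWeight hp₀ hp₁ hc₀ hc n m
        · exact pow_left_le_crossWeight hp₀ hp₁ hc₀ hc m (n + m)
    _ = sampleWeight p (append ω (append η ω)) := by simp only [sampleWeight_append]

end Weight

section LimitType

variable {p : ℕ → ℝ} {n : ℕ}

/-- The rank-`k` types of the graphs of positive probability. -/
def positiveTypes (hp₁ : ∀ i, p i < 1) (k : ℕ) : Submonoid (RankType k) where
  carrier := {t | ∃ (n : ℕ) (ω : Sample n), 0 < sampleWeight p ω ∧ rankType k (Vertices ω) = t}
  one_mem' := by
    have : IsEmpty (Vertices (default : Sample 0)) := inferInstanceAs (IsEmpty (Fin 0))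
    exact ⟨0, default, by simp [sampleWeight], rankType_of_isEmpty⟩
  mul_mem' := by
    rintro _ _ ⟨m, ω, hω, rfl⟩ ⟨n, η, hη, rfl⟩
    refine ⟨m + n, append ω η, ?_, rankType_append k ω η⟩
    rw [sampleWeight_append]
    exact mul_pos (mul_pos hω hη) (crossWeight_pos hp₁ m n)

theorem exists_absorbing_sample (hp₁ : ∀ i, p i < 1) (k : ℕ) :
    ∃ (m : ℕ) (υ : Sample m), 0 < sampleWeight p υ ∧
      ∀ {n : ℕ} (η : Sample n), 0 < sampleWeight p η →
        rankType k (Vertices (append υ (append η υ))) = rankType k (Vertices υ) := by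
  obtain ⟨⟨_, m, υ, hυ, rfl⟩, absorbs⟩ :=
    exists_forall_mul_mul_eq_self (M := positiveTypes hp₁ k) fun t ↦
      (exists_pow_eq_pow_succ t.1).imp fun _ ↦ Subtype.ext
  refine ⟨m, υ, hυ, fun η hη ↦ ?_⟩
  rw [rankType_append, rankType_append, ← mul_assoc]
  exact congrArg Subtype.val (absorbs ⟨_, _, η, hη, rfl⟩)

theorem sum_sampleWeight_le_Pr (hp₀ : ∀ i, 0 ≤ p i) (hp₁ : ∀ i, p i < 1) {ι : Type*} [Fintype ι]
    {f : ι → Sample n} (f_injective : Function.Injective f) {P : Sample n → Prop}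
    (hP : ∀ i, 0 < sampleWeight p (f i) → P (f i)) : ∑ i, sampleWeight p (f i) ≤ Pr p n P := by
  classical
  let mass (ω : Sample n) : ℝ := if P ω then sampleWeight p ω else 0
  have mass_nonneg (ω : Sample n) : 0 ≤ mass ω := by
    unfold mass
    split_ifs
    exacts [sampleWeight_nonneg hp₀ hp₁ ω, le_rfl]
  have weight_le_mass (i : ι) : sampleWeight p (f i) ≤ mass (f i) := by
    unfold mass
    split_ifs with h
    exacts [le_rfl, not_lt.mp (mt (hP i) h)]
  calc ∑ i, sampleWeight p (f i)
      ≤ ∑ i, mass (f i) := Finset.sum_le_sum fun i _ ↦ weight_le_mass i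
    _ = ∑ ω ∈ Finset.univ.image f, mass ω := (Finset.sum_image f_injective.injOn).symm
    _ ≤ Pr p n P := Finset.sum_le_univ_sum_of_nonneg mass_nonneg

theorem exists_likely_rankType (hp₀ : ∀ i, 0 ≤ p i) (hp₁ : ∀ i, p i < 1) {c : ℝ} (hc₀ : 0 < c)
    (hc : ∀ n, c ≤ ∏ i ∈ Finset.Icc 1 n, (1 - p i)) (k : ℕ) :
    ∃ (t : RankType k) (ε : ℝ) (N : ℕ), 0 < ε ∧
      ∀ n > N, ε < Pr p n fun ω ↦ rankType k (Vertices ω) = t := by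
  obtain ⟨m, υ, hυ, absorbs⟩ := exists_absorbing_sample hp₁ k
  set δ := (sampleWeight p υ * c ^ m) ^ 2
  have δ_pos : 0 < δ := by positivity
  refine ⟨rankType k (Vertices υ), δ / 2, m + m, half_pos δ_pos, fun n hn ↦ ?_⟩
  obtain ⟨l, rfl⟩ : ∃ l, n = m + (l + m) := ⟨n - (m + m), by omega⟩
  have sandwich_injective : Function.Injective fun η : Sample l ↦ append υ (append η υ) :=
    fun η η' h ↦ (append_inj (append_inj h).2).1
  have middle_pos (η : Sample l) (h : 0 < sampleWeight p (append υ (append η υ))) :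
      0 < sampleWeight p η := by
    refine (sampleWeight_nonneg hp₀ hp₁ η).lt_of_ne' fun hη ↦ h.ne' ?_
    simp [sampleWeight_append, hη]
  calc δ / 2 < δ := half_lt_self δ_pos
    _ = ∑ η : Sample l, δ * sampleWeight p η := by rw [← Finset.mul_sum, sum_sampleWeight, mul_one]
    _ ≤ ∑ η : Sample l, sampleWeight p (append υ (append η υ)) :=
      Finset.sum_le_sum fun η _ ↦ sq_mul_sampleWeight_le_sandwich hp₀ hp₁ hc₀.le hc υ η
    _ ≤ Pr p (m + (l + m)) fun ω ↦ rankType k (Vertices ω) = rankType k (Vertices υ) :=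
      sum_sampleWeight_le_Pr hp₀ hp₁ sandwich_injective fun η h ↦ absorbs η (middle_pos η h)

end LimitType

theorem Pr_mono {p : ℕ → ℝ} (hp₀ : ∀ i, 0 ≤ p i) (hp₁ : ∀ i, p i < 1) {n : ℕ}
    {P Q : Sample n → Prop} (hPQ : ∀ ω, P ω → Q ω) : Pr p n P ≤ Pr p n Q := by
  refine Finset.sum_le_sum fun ω _ ↦ ?_
  have := sampleWeight_nonneg hp₀ hp₁ ω
  split_ifs with hP hQ
  exacts [le_rfl, absurd (hPQ ω hP) hQ, this, le_rfl]

/-- If `0 ≤ p i < 1` and `∏_{i=1}^∞ (1 - p i) > 0`, then for every finite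
family `{ψ α}` of sentences of `L≤` there are a subfamily `A'`, an `ε > 0` and an `N` such
that for all `n > N`, with probability greater than `ε` the graph `G(n, p̄)` satisfies all
sentences of `A'` and the negations of all the remaining ones. -/
theorem statement_9 (p : ℕ → ℝ) (hp : ∀ i, 0 ≤ p i ∧ p i < 1)
    (hprod : ∃ c : ℝ, 0 < c ∧ ∀ n : ℕ, c ≤ ∏ i ∈ Finset.Icc 1 n, (1 - p i))
    (A : Type) [Fintype A] (ψ : A → Lle.Sentence) :
    ∃ (A' : Set A) (ε : ℝ) (N : ℕ), 0 < ε ∧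
      ∀ n : ℕ, N < n →
        ε < Pr p n (fun ω => (∀ α ∈ A', SatLe ω (ψ α)) ∧ (∀ α ∉ A', ¬ SatLe ω (ψ α))) := by
  obtain ⟨c, hc₀, hc⟩ := hprod
  let k := Finset.univ.sup fun α ↦ quantifierRank (ψ α)
  have rank_le (α : A) : quantifierRank (ψ α) ≤ k :=
    Finset.le_sup (f := fun α ↦ quantifierRank (ψ α)) (Finset.mem_univ α)
  obtain ⟨t, ε, N, ε_pos, lt_Pr⟩ :=
    exists_likely_rankType (fun i ↦ (hp i).1) (fun i ↦ (hp i).2) hc₀ hc k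
  obtain ⟨M, _, rfl⟩ := exists_rankType_eq t
  refine ⟨{α | M ⊨ ψ α}, ε, N, ε_pos, fun n hn ↦ (lt_Pr n hn).trans_le ?_⟩
  refine Pr_mono (fun i ↦ (hp i).1) (fun i ↦ (hp i).2) fun ω hω ↦ ?_
  have sat_iff (α : A) : SatLe ω (ψ α) ↔ M ⊨ ψ α :=
    (rankType_eq_iff.mp hω).realize_sentence_iff (rank_le α)
  exact ⟨fun α ↦ (sat_iff α).mpr, fun α ↦ mt (sat_iff α).mp⟩

end RandomGraph
end
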